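/- arXiv:0903.0473 — 12 statements merged into one kernel-verified Lean document; each statement's English description precedes it below -/
import Mathlib

section
/- Let s1, s2, s3, s4 be nonnegative integers. The double series ζ_so(s1,s2,s3,s4) = ∑_{m,n=1}^∞ 1/(m^{s1} n^{s2} (m+n)^{s3} (m+2n)^{s4}) converges if and only if s1+s3+s4 > 1, s2+s3+s4 > 1, and s1+s2+s3+s4 > 2. -/
theorem aux_not (c : ℝ) (hc : 0 < c) (f : ℕ+ → ℝ) (h : ∀ n : ℕ+, c / (n : ℝ) ≤ f n) : ¬ Summable f := by
  intro hf
  have h1 : Summable (fun n : ℕ+ => c / (n : ℝ)) :=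
    Summable.of_nonneg_of_le (fun n => by positivity) h hf
  have h2 : Summable (fun n : ℕ+ => 1 / (n : ℝ)) := by
    have := h1.mul_left (1 / c)
    refine this.congr fun n => ?_
    field_simp
  have h3 : Summable (fun n : ℕ => 1 / (n : ℝ)) :=
    (summable_pnat_iff_summable_nat (f := fun n : ℕ => 1 / (n : ℝ))).1 h2
  exact Real.not_summable_one_div_natCast h3

theorem aux_sqrt : Summable (fun n : ℕ+ => 1 / (√(n : ℝ)) ^ 3) := by
  have h : Summable (fun n : ℕ => 1 / (n : ℝ) ^ (3 / 2 : ℝ)) :=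
    Real.summable_one_div_nat_rpow.2 (by norm_num)
  have h2 := (summable_pnat_iff_summable_nat (f := fun n : ℕ => 1 / (n : ℝ) ^ (3 / 2 : ℝ))).2 h
  refine h2.congr fun n => ?_
  rw [Real.sqrt_eq_rpow, ← Real.rpow_mul_natCast (by positivity)]
  norm_num

theorem aux_low (x y : ℝ) (hx : 1 ≤ x) (hy : 1 ≤ y) (s1 s2 s3 s4 : ℕ)
    (h1 : 1 < s1 + s3 + s4) (h2 : 1 < s2 + s3 + s4) (h3 : 2 < s1 + s2 + s3 + s4) :
    √x ^ 3 * √y ^ 3 ≤ x ^ s1 * y ^ s2 * (x + y) ^ s3 * (x + 2 * y) ^ s4 := by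
  obtain ⟨j, k, hj, hk, hjk⟩ : ∃ j k, 3 ≤ 2 * s1 + j ∧ 3 ≤ 2 * s2 + k ∧ j + k = 2 * (s3 + s4) :=
    ⟨3 - 2 * s1, 2 * (s3 + s4) - (3 - 2 * s1), by omega, by omega, by omega⟩
  have hu : 1 ≤ √x := Real.one_le_sqrt.2 hx
  have hv : 1 ≤ √y := Real.one_le_sqrt.2 hy
  have hxu : √x ^ 2 = x := Real.sq_sqrt (by linarith)
  have hyv : √y ^ 2 = y := Real.sq_sqrt (by linarith)
  have hw : √(x + y) ^ 2 = x + y := Real.sq_sqrt (by linarith)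
  have huw : √x ≤ √(x + y) := Real.sqrt_le_sqrt (by linarith)
  have hvw : √y ≤ √(x + y) := Real.sqrt_le_sqrt (by linarith)
  calc √x ^ 3 * √y ^ 3 ≤ √x ^ (2 * s1 + j) * √y ^ (2 * s2 + k) := by
        gcongr
    _ = x ^ s1 * y ^ s2 * (√x ^ j * √y ^ k) := by
        rw [pow_add, pow_add, pow_mul, pow_mul, hxu, hyv]; ring
    _ ≤ x ^ s1 * y ^ s2 * (√(x + y) ^ j * √(x + y) ^ k) := by gcongr
    _ = x ^ s1 * y ^ s2 * (x + y) ^ s3 * (x + y) ^ s4 := by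
        rw [← pow_add, hjk, pow_mul, hw, pow_add]; ring
    _ ≤ _ := by gcongr; linarith

theorem aux_up (x y z : ℝ) (hx : 1 ≤ x) (hy : 1 ≤ y) (hxz : x ≤ z) (hyz : y ≤ z)
    (s1 s2 s3 s4 : ℕ) :
    x ^ s1 * y ^ s2 * (x + y) ^ s3 * (x + 2 * y) ^ s4 ≤
      3 ^ (s3 + s4) * (x ^ s1 * y ^ s2 * z ^ (s3 + s4)) := by
  have hz : 0 ≤ z := by linarith
  calc _ ≤ x ^ s1 * y ^ s2 * (3 * z) ^ s3 * (3 * z) ^ s4 := by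
        gcongr
        · linarith
        · linarith
    _ = _ := by rw [mul_pow, mul_pow]; ring

theorem pn1 (n : ℕ+) : (1 : ℝ) ≤ (n : ℝ) := by exact_mod_cast n.pos

theorem stmt1 (s1 s2 s3 s4 : ℕ) :
    Summable (fun p : ℕ+ × ℕ+ =>
      1 / ((p.1 : ℝ) ^ s1 * (p.2 : ℝ) ^ s2 * ((p.1 : ℝ) + (p.2 : ℝ)) ^ s3 *
        ((p.1 : ℝ) + 2 * (p.2 : ℝ)) ^ s4)) ↔
    (1 < s1 + s3 + s4 ∧ 1 < s2 + s3 + s4 ∧ 2 < s1 + s2 + s3 + s4) := by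
  constructor
  · intro h
    refine ⟨?_, ?_, ?_⟩
    · by_contra hc
      have hs := h.comp_injective (i := fun n : ℕ+ => (n, (1 : ℕ+))) (fun a b hab => by simpa using hab)
      refine aux_not (1 / 3 ^ (s3 + s4)) (by positivity) _ (fun n => ?_) hs
      have hn := pn1 n
      have := aux_up n 1 n hn le_rfl le_rfl hn s1 s2 s3 s4
      have h2 : (n : ℝ) ^ (s1 + (s3 + s4)) ≤ n ^ 1 := pow_le_pow_right₀ hn (by omega)
      simp only [Function.comp, PNat.one_coe, Nat.cast_one]
      rw [div_div]
      apply one_div_le_one_div_of_le (by positivity)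
      refine this.trans ?_
      gcongr
      rw [one_pow, mul_one, ← pow_add]; simpa using h2
    · by_contra hc
      have hs := h.comp_injective (i := fun n : ℕ+ => ((1 : ℕ+), n)) (fun a b hab => by simpa using hab)
      refine aux_not (1 / 3 ^ (s3 + s4)) (by positivity) _ (fun n => ?_) hs
      have hn := pn1 n
      have := aux_up 1 n n le_rfl hn hn le_rfl s1 s2 s3 s4
      have h2 : (n : ℝ) ^ (s2 + (s3 + s4)) ≤ n ^ 1 := pow_le_pow_right₀ hn (by omega)
      simp only [Function.comp, PNat.one_coe, Nat.cast_one]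
      rw [div_div]
      apply one_div_le_one_div_of_le (by positivity)
      refine this.trans ?_
      gcongr
      rw [one_pow, one_mul, ← pow_add]; simpa using h2
    · by_contra hc
      have hs := h.prod
      refine aux_not (1 / 3 ^ (s3 + s4)) (by positivity) _ (fun n => ?_) hs
      have hn := pn1 n
      have hsum := (h.prod_factor n).sum_le_tsum (Finset.Icc 1 n) (fun i _ => by positivity)
      refine le_trans ?_ hsum
      have hb := Finset.card_nsmul_le_sum (Finset.Icc 1 n) (fun m : ℕ+ =>
        1 / ((n : ℝ) ^ s1 * (m : ℝ) ^ s2 * ((n : ℝ) + (m : ℝ)) ^ s3 *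
        ((n : ℝ) + 2 * (m : ℝ)) ^ s4)) (1 / (3 ^ (s3 + s4) * (n : ℝ) ^ 2)) (fun m hm => by
          have hm1 := pn1 m
          have hmn : (m : ℝ) ≤ n := by exact_mod_cast (Finset.mem_Icc.1 hm).2
          apply one_div_le_one_div_of_le (by positivity)
          refine (aux_up n m n hn hm1 le_rfl hmn s1 s2 s3 s4).trans ?_
          gcongr
          calc (n : ℝ) ^ s1 * (m : ℝ) ^ s2 * (n : ℝ) ^ (s3 + s4)
              ≤ (n : ℝ) ^ s1 * (n : ℝ) ^ s2 * (n : ℝ) ^ (s3 + s4) := by gcongr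
            _ = (n : ℝ) ^ (s1 + s2 + (s3 + s4)) := by ring
            _ ≤ _ := pow_le_pow_right₀ hn (by omega))
      refine le_trans (le_of_eq ?_) hb
      rw [PNat.card_Icc]
      simp
      field_simp
  · rintro ⟨h1, h2, h3⟩
    have hs := aux_sqrt.mul_of_nonneg aux_sqrt (fun n => by positivity) (fun n => by positivity)
    refine Summable.of_nonneg_of_le (fun p => by positivity) (fun p => ?_) hs
    have ha := pn1 p.1
    have hb := pn1 p.2
    rw [one_div_mul_one_div]
    apply one_div_le_one_div_of_le (by positivity)
    exact aux_low _ _ ha hb s1 s2 s3 s4 h1 h2 h3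
end

section
/- Let d ≥ 1 and let s1, …, sd and s be arbitrary (possibly negative) integers. The Mordell–Tornheim series ζ_MT(s1,…,sd;s) = ∑_{m1,…,md=1}^∞ m1^{−s1}⋯md^{−sd}(m1+⋯+md)^{−s} converges if and only if for every nonempty subset {i1,…,iℓ} of {1,2,…,d} one has s + s_{i1} + ⋯ + s_{iℓ} > ℓ. -/
open Finset

theorem aux_lin {d : ℕ} (a x : Fin d → ℝ) (c : ℝ) (j : Fin d) (hx0 : ∀ i, 0 ≤ x i)
    (hxj : ∀ i, x i ≤ x j)
    (h : ∀ T : Finset (Fin d), T.Nonempty → 0 ≤ c + ∑ i ∈ T, a i) :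
    0 ≤ c * x j + ∑ i, a i * x i := by
  classical
  have h1 := h (univ.filter fun i => i = j ∨ a i < 0) ⟨j, by simp⟩
  have h2 : (∑ i ∈ univ.filter (fun i => i = j ∨ a i < 0), a i) * x j ≤ ∑ i, a i * x i := by
    rw [sum_filter, sum_mul]
    apply sum_le_sum
    intro i _
    split_ifs with hi
    · rcases hi with rfl | hi
      · rfl
      · exact mul_le_mul_of_nonpos_left (hxj i) hi.le
    · push Not at hi
      rw [zero_mul]
      exact mul_nonneg hi.2 (hx0 i)
  nlinarith [mul_nonneg h1 (hx0 j)]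

theorem aux_pow (n x K : ℝ) (s : ℤ) (hn : 0 < n) (hx : n ≤ x) (hK : x ≤ K * n) :
    x ^ s ≤ K ^ |s| * n ^ s := by
  have hK1 : 1 ≤ K := by
    by_contra hc
    push Not at hc
    nlinarith
  have hx0 : 0 < x := by linarith
  rcases le_total 0 s with h | h
  · rw [abs_of_nonneg h, ← mul_zpow]
    exact zpow_le_zpow_left₀ h hx0.le hK
  · have : x ^ s ≤ n ^ s := by
      obtain ⟨k, rfl⟩ := Int.exists_eq_neg_ofNat h
      simp only [zpow_neg, zpow_natCast]
      gcongr
    have h2 : 1 ≤ K ^ |s| := one_le_zpow₀ hK1 (abs_nonneg _)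
    have h3 : 0 < n ^ s := zpow_pos hn _
    nlinarith

theorem aux_pow' (n x K : ℝ) (s : ℤ) (hn : 0 < n) (hx : n ≤ x) (hK : x ≤ K * n) :
    K ^ (-|s|) * n ^ s ≤ x ^ s := by
  have hK0 : 0 < K := by
    by_contra hc
    push Not at hc
    nlinarith
  have hx0 : 0 < x := by linarith
  have := aux_pow n x K (-s) hn hx hK
  rw [abs_neg, zpow_neg, zpow_neg] at this
  have hp1 := zpow_pos hn s
  have hp2 := zpow_pos hx0 s
  have hp3 := zpow_pos hK0 |s|
  rw [zpow_neg]
  rw [← div_eq_mul_inv, inv_eq_one_div, div_le_div_iff₀ hp2 hp1] at this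
  rw [inv_mul_le_iff₀ hp3]
  linarith

theorem aux_prod (g : ℕ+ → ℝ) (hg0 : ∀ n, 0 ≤ g n) (hg : Summable g) (d : ℕ) :
    Summable (fun m : Fin d → ℕ+ => ∏ i, g (m i)) := by
  induction d with
  | zero => exact Summable.of_finite
  | succ d ih =>
    rw [← (Fin.consEquiv (fun _ : Fin (d+1) => ℕ+)).summable_iff]
    have := hg.mul_of_nonneg ih hg0 (fun m => prod_nonneg fun i _ => hg0 _)
    convert this using 1
    ext p
    simp [Fin.prod_univ_succ, Fin.consEquiv]

theorem aux_suff (d : ℕ) (hd : 1 ≤ d) (s : Fin d → ℤ) (s0 : ℤ)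
    (h : ∀ T : Finset (Fin d), T.Nonempty → (T.card : ℤ) < s0 + ∑ i ∈ T, s i) :
    Summable (fun m : Fin d → ℕ+ =>
      (∏ i, ((m i : ℕ) : ℝ) ^ (-(s i))) * (∑ i, ((m i : ℕ) : ℝ)) ^ (-s0)) := by
  have hdR : (1 : ℝ) ≤ d := by exact_mod_cast hd
  have hg : Summable (fun n : ℕ+ => ((n : ℕ) : ℝ) ^ (-(1 + 1 / (d : ℝ)))) := by
    have h1 : Summable (fun n : ℕ => (n : ℝ) ^ (-(1 + 1 / (d : ℝ)))) := by
      rw [Real.summable_nat_rpow]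
      have : 0 < 1 / (d : ℝ) := by positivity
      linarith
    exact h1.comp_injective PNat.coe_injective
  have hs := (aux_prod _ (fun n => by positivity) hg d).mul_left ((d : ℝ) ^ |-s0|)
  refine Summable.of_nonneg_of_le (fun m => ?_) (fun m => ?_) hs
  · positivity
  have : Nonempty (Fin d) := ⟨⟨0, hd⟩⟩
  obtain ⟨j, hj⟩ := Finite.exists_max m
  have hpos : ∀ i, (1 : ℝ) ≤ ((m i : ℕ) : ℝ) := fun i => by exact_mod_cast (m i).pos
  have hmax : ∀ i, ((m i : ℕ) : ℝ) ≤ ((m j : ℕ) : ℝ) := fun i => by exact_mod_cast hj i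
  have hS := aux_pow ((m j : ℕ) : ℝ) (∑ i, ((m i : ℕ) : ℝ)) d (-s0) (by linarith [hpos j])
    (single_le_sum (f := fun i => ((m i : ℕ) : ℝ)) (fun i _ => by positivity) (mem_univ j))
    (by
      have := sum_le_card_nsmul univ (fun i => ((m i : ℕ) : ℝ)) _ (fun i _ => hmax i)
      simpa using this)
  have key := aux_lin (fun i => (s i : ℝ) - (1 + 1 / (d : ℝ))) (fun i => Real.log ((m i : ℕ) : ℝ))
    s0 j (fun i => Real.log_nonneg (hpos i))
    (fun i => Real.log_le_log (by linarith [hpos i]) (hmax i))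
    (by
      intro T hT
      have h1 : ((T.card : ℝ) + 1) ≤ s0 + ∑ i ∈ T, (s i : ℝ) := by
        exact_mod_cast h T hT
      rw [sum_sub_distrib, sum_const, nsmul_eq_mul]
      have h2 : (T.card : ℝ) * (1 / d) ≤ 1 := by
        have : (T.card : ℝ) ≤ d := by
          have := card_le_univ T
          simp at this
          exact_mod_cast this
        rw [mul_one_div, div_le_one (by linarith)]
        exact this
      linarith)
  have hz : ∀ i (k : ℤ), ((m i : ℕ) : ℝ) ^ k = Real.exp (k * Real.log ((m i : ℕ) : ℝ)) := by
    intro i k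
    rw [← Real.rpow_intCast, Real.rpow_def_of_pos (by linarith [hpos i]), mul_comm]
  have hr : ∀ i (k : ℝ), ((m i : ℕ) : ℝ) ^ k = Real.exp (k * Real.log ((m i : ℕ) : ℝ)) := by
    intro i k
    rw [Real.rpow_def_of_pos (by linarith [hpos i]), mul_comm]
  have hfin : (∏ i, ((m i : ℕ) : ℝ) ^ (-(s i))) * ((m j : ℕ) : ℝ) ^ (-s0) ≤
      ∏ i, ((m i : ℕ) : ℝ) ^ (-(1 + 1 / (d : ℝ))) := by
    simp only [hz, hr, ← Real.exp_sum, ← Real.exp_add]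
    apply Real.exp_le_exp.2
    simp only [sub_mul, sum_sub_distrib] at key
    push_cast
    simp only [neg_mul, sum_neg_distrib]
    linarith
  calc _ ≤ (∏ i, ((m i : ℕ) : ℝ) ^ (-(s i))) * ((d : ℝ) ^ |-s0| * ((m j : ℕ) : ℝ) ^ (-s0)) := by
        gcongr
    _ = (d : ℝ) ^ |-s0| * ((∏ i, ((m i : ℕ) : ℝ) ^ (-(s i))) * ((m j : ℕ) : ℝ) ^ (-s0)) := by ring
    _ ≤ _ := by gcongr

theorem aux_nec (d : ℕ) (hd : 1 ≤ d) (s : Fin d → ℤ) (s0 : ℤ)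
    (h : Summable (fun m : Fin d → ℕ+ =>
      (∏ i, ((m i : ℕ) : ℝ) ^ (-(s i))) * (∑ i, ((m i : ℕ) : ℝ)) ^ (-s0)))
    (T : Finset (Fin d)) (hT : T.Nonempty) : (T.card : ℤ) < s0 + ∑ i ∈ T, s i := by
  classical
  obtain ⟨j, hj⟩ := hT
  let U := T.erase j
  let φ : (Σ n : ℕ+, (U → Fin n)) → (Fin d → ℕ+) := fun p i =>
    if hi : i ∈ U then ⟨p.1 + p.2 ⟨i, hi⟩, by have := p.1.pos; omega⟩
    else if i = j then p.1 else 1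
  have hjU : j ∉ U := by simp [U]
  have hφ : Function.Injective φ := by
    rintro ⟨n, k⟩ ⟨n', k'⟩ he
    have h1 : n = n' := by simpa [φ, hjU] using congrFun he j
    subst h1
    congr
    funext i
    have h2 := congrFun he i
    simp only [φ, i.2, dif_pos] at h2
    have h3 := congrArg PNat.val h2
    simp at h3
    exact Fin.ext h3
  have h1 := (h.comp_injective hφ).sigma
  have hdR : (1 : ℝ) ≤ d := by exact_mod_cast hd
  set C : ℝ := (∏ i ∈ T, (2 : ℝ) ^ (-|-s i|)) * (2 * d : ℝ) ^ (-|-s0|) with hC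
  have hCpos : 0 < C := by positivity
  have hterm : ∀ p, C * ((p.1 : ℕ) : ℝ) ^ (-(s0 + ∑ i ∈ T, s i)) ≤
      (∏ i, ((φ p i : ℕ) : ℝ) ^ (-(s i))) * (∑ i, ((φ p i : ℕ) : ℝ)) ^ (-s0) := by
    intro p
    have hn : (1 : ℝ) ≤ ((p.1 : ℕ) : ℝ) := by exact_mod_cast p.1.pos
    have hb : ∀ i ∈ T, ((p.1 : ℕ) : ℝ) ≤ ((φ p i : ℕ) : ℝ) ∧
        ((φ p i : ℕ) : ℝ) ≤ 2 * ((p.1 : ℕ) : ℝ) := by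
      intro i hi
      by_cases hij : i = j
      · subst hij
        have hv : φ p i = p.1 := by
          exact (dif_neg hjU).trans (if_pos rfl)
        rw [hv]
        constructor <;> linarith
      · have hiU : i ∈ U := by simp [U, hi, hij]
        have := (p.2 ⟨i, hiU⟩).2
        have hv : (φ p i : ℕ) = (p.1 : ℕ) + (p.2 ⟨i, hiU⟩ : ℕ) := by
          exact congrArg PNat.val (dif_pos hiU)
        rw [hv]
        constructor
        · exact_mod_cast Nat.le_add_right _ _
        · exact_mod_cast (show (p.1 : ℕ) + (p.2 ⟨i, hiU⟩ : ℕ) ≤ 2 * (p.1 : ℕ) by omega)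
    have hb' : ∀ i ∉ T, φ p i = 1 := by
      intro i hi
      have hij : i ≠ j := fun e => hi (e ▸ hj)
      simp [φ, U, hi, hij]
    have hle : ∀ i, ((φ p i : ℕ) : ℝ) ≤ 2 * ((p.1 : ℕ) : ℝ) := by
      intro i
      by_cases hi : i ∈ T
      · exact (hb i hi).2
      · rw [hb' i hi]
        simp
        linarith
    have hP : (∏ i ∈ T, (2 : ℝ) ^ (-|-s i|)) * ((p.1 : ℕ) : ℝ) ^ (-∑ i ∈ T, s i) ≤
        ∏ i, ((φ p i : ℕ) : ℝ) ^ (-(s i)) := by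
      have e1 : ∏ i, ((φ p i : ℕ) : ℝ) ^ (-(s i)) = ∏ i ∈ T, ((φ p i : ℕ) : ℝ) ^ (-(s i)) := by
        symm
        apply prod_subset (subset_univ T)
        intro i _ hi
        simp [hb' i hi]
      have e2 : ((p.1 : ℕ) : ℝ) ^ (-∑ i ∈ T, s i) = ∏ i ∈ T, ((p.1 : ℕ) : ℝ) ^ (-s i) := by
        rw [← sum_neg_distrib]
        generalize T = T'
        induction T' using Finset.induction_on with
        | empty => simp
        | insert a t ha ih => rw [sum_insert ha, prod_insert ha, zpow_add₀ (by linarith), ih]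
      rw [e1, e2, ← prod_mul_distrib]
      apply prod_le_prod
      · intro i _
        positivity
      · intro i hi
        exact aux_pow' _ _ _ _ (by linarith) (hb i hi).1 (hb i hi).2
    have hS : (2 * d : ℝ) ^ (-|-s0|) * ((p.1 : ℕ) : ℝ) ^ (-s0) ≤
        (∑ i, ((φ p i : ℕ) : ℝ)) ^ (-s0) := by
      apply aux_pow' _ _ _ _ (by linarith)
      · exact (hb j hj).1.trans (single_le_sum (f := fun i => ((φ p i : ℕ) : ℝ))
          (fun i _ => by positivity) (mem_univ j))
      · have := sum_le_card_nsmul univ (fun i => ((φ p i : ℕ) : ℝ)) _ (fun i _ => hle i)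
        simp only [card_univ, Fintype.card_fin, nsmul_eq_mul] at this
        linarith
    have := mul_le_mul hP hS (by positivity) (by positivity)
    refine le_trans (le_of_eq ?_) this
    rw [hC, neg_add, zpow_add₀ (by linarith)]
    ring
  have h2 : Summable (fun n : ℕ+ =>
      C * ((n : ℕ) : ℝ) ^ ((T.card : ℤ) - 1 - (s0 + ∑ i ∈ T, s i))) := by
    refine Summable.of_nonneg_of_le (fun n => by positivity) (fun n => ?_) h1
    rw [tsum_fintype]
    have := card_nsmul_le_sum (univ : Finset (U → Fin n))
      (fun k => (∏ i, ((φ ⟨n, k⟩ i : ℕ) : ℝ) ^ (-(s i))) * (∑ i, ((φ ⟨n, k⟩ i : ℕ) : ℝ)) ^ (-s0))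
      (C * ((n : ℕ) : ℝ) ^ (-(s0 + ∑ i ∈ T, s i))) (fun k _ => hterm ⟨n, k⟩)
    refine le_trans (le_of_eq ?_) this
    have hn : ((n : ℕ) : ℝ) ≠ 0 := by exact_mod_cast n.ne_zero
    have hc : (T.card : ℤ) - 1 = (U.card : ℤ) := by
      have : U.card + 1 = T.card := card_erase_add_one hj
      omega
    rw [hc, sub_eq_add_neg, zpow_add₀ hn]
    simp
    ring
  rw [summable_mul_left_iff hCpos.ne'] at h2
  have h3 := (summable_pnat_iff_summable_nat (f := fun n : ℕ =>
    (n : ℝ) ^ (((T.card : ℤ) - 1 - (s0 + ∑ i ∈ T, s i) : ℤ) : ℝ))).1 (by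
      simpa only [Real.rpow_intCast] using h2)
  rw [Real.summable_nat_rpow] at h3
  have h4 : ((T.card : ℤ) - 1 - (s0 + ∑ i ∈ T, s i) : ℤ) < -1 := by exact_mod_cast h3
  omega

theorem stmt2 (d : ℕ) (hd : 1 ≤ d) (s : Fin d → ℤ) (s0 : ℤ) :
    Summable (fun m : Fin d → ℕ+ =>
      (∏ i, ((m i : ℕ) : ℝ) ^ (-(s i))) * (∑ i, ((m i : ℕ) : ℝ)) ^ (-s0)) ↔
    ∀ T : Finset (Fin d), T.Nonempty → (T.card : ℤ) < s0 + ∑ i ∈ T, s i :=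
  ⟨fun h T hT => aux_nec d hd s s0 h T hT, aux_suff d hd s s0⟩
end

section
/- Let r ≥ 1 and n1, …, nr be positive integers, and let x1, …, xr be nonzero real numbers with x := x1 + ⋯ + xr ≠ 0. Then ∏_{j=1}^r x_j^{−n_j} = ∑_{j=1}^r ∑_{(a_k)_{k≠j}, 0 ≤ a_k ≤ n_k−1} M_j · x^{−(n_j + A_j)} · ∏_{k≠j} x_k^{−(n_k − a_k)}, where A_j = ∑_{k≠j} a_k and M_j = (n_j + A_j − 1)!/(n_j − 1)! · ∏_{k≠j} 1/a_k!. -/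
namespace PF
open Finset

noncomputable def W {ι : Type} [Fintype ι] (y : ι → ℝ) (a : ι → ℕ) : ℝ :=
  ((∑ k, a k).factorial : ℝ) * ∏ k, (y k ^ a k / ((a k).factorial : ℝ))

noncomputable def V {ι : Type} [Fintype ι] (y : ι → ℝ) (i : ι) (a : ι → ℕ) : ℝ :=
  (a i : ℝ) * (((∑ k, a k) - 1).factorial : ℝ) * ∏ k, (y k ^ a k / ((a k).factorial : ℝ))

variable {ι : Type} [Fintype ι] [DecidableEq ι]

lemma sum_split (a : ι → ℕ) (i : ι) : ∑ k, a k = a i + ∑ k ∈ univ.erase i, a k :=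
  (Finset.add_sum_erase _ _ (mem_univ i)).symm

lemma erase_upd {M : Type} (b : ι → ℕ) (i : ι) (m : ℕ) (f : ι → ℕ → M) (k : ι)
    (hk : k ∈ univ.erase i) : f k (Function.update b i m k) = f k (b k) := by
  rw [Function.update_of_ne (ne_of_mem_erase hk)]

lemma V_upd (y : ι → ℝ) (i : ι) (b : ι → ℕ) :
    V y i (Function.update b i (b i + 1)) = y i * W y b := by
  unfold V W
  rw [sum_split _ i, sum_split b i, ← Finset.mul_prod_erase _ _ (mem_univ i),
    ← Finset.mul_prod_erase univ (fun k => y k ^ b k / ((b k).factorial : ℝ)) (mem_univ i),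
    sum_congr rfl (erase_upd b i _ (fun _ m => m)),
    prod_congr rfl (erase_upd b i _ (fun k m => y k ^ m / (m.factorial : ℝ)))]
  simp only [Function.update_self]
  rw [show b i + 1 + ∑ k ∈ univ.erase i, b k - 1 = b i + ∑ k ∈ univ.erase i, b k by omega,
    Nat.factorial_succ]
  have : ((b i).factorial : ℝ) ≠ 0 := by positivity
  have : ((b i : ℝ) + 1) ≠ 0 := by positivity
  push_cast
  field_simp
  ring

lemma sum_V (y : ι → ℝ) (a : ι → ℕ) (ha : a ≠ 0) : ∑ i, V y i a = W y a := by
  unfold V W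
  rw [← Finset.sum_mul, ← Finset.sum_mul]
  congr 1
  have h : ∑ k, a k ≠ 0 := by
    intro h
    apply ha
    funext k
    simpa using (Finset.sum_eq_zero_iff.1 h) k (mem_univ k)
  rw [← Nat.mul_factorial_pred h]
  push_cast
  rfl

lemma sum_box (y : ι → ℝ) (n : ι → ℕ) (i : ι) :
    ∑ a ∈ Fintype.piFinset (fun k => range (n k)), V y i a =
    ∑ b ∈ (Fintype.piFinset (fun k => range (n k))).filter (fun b => b i + 1 ≠ n i), y i * W y b := by
  rw [← Finset.sum_filter_of_ne (p := fun a => a i ≠ 0)]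
  · symm
    refine Finset.sum_nbij' (fun b => Function.update b i (b i + 1))
      (fun a => Function.update a i (a i - 1)) ?_ ?_ ?_ ?_ ?_
    · intro b hb
      simp only [mem_filter, Fintype.mem_piFinset, mem_range] at hb ⊢
      refine ⟨fun k => ?_, by simp⟩
      have := hb.1 k
      by_cases hk : k = i
      · subst hk; simp; omega
      · simpa [hk] using this
    · intro b hb
      simp only [mem_filter, Fintype.mem_piFinset, mem_range] at hb ⊢
      have h0 := hb.1 i
      refine ⟨fun k => ?_, by simp; omega⟩
      have := hb.1 k
      by_cases hk : k = i
      · subst hk; simp; omega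
      · simpa [hk] using this
    · intro b hb; simp
    · intro b hb
      simp only [mem_filter] at hb
      simp [Nat.sub_add_cancel (Nat.pos_of_ne_zero hb.2)]
    · intro b hb; exact (V_upd y i b).symm
  · intro a _ h h0
    exact h (by simp [V, h0])

lemma main (y : ι → ℝ) (hy : ∑ i, y i = 1) (n : ι → ℕ) (hn : ∀ j, 0 < n j) :
    ∑ i, ∑ b ∈ (Fintype.piFinset (fun k => range (n k))).filter (fun b => b i + 1 = n i),
      y i * W y b = 1 := by
  set S := Fintype.piFinset (fun k => range (n k)) with hS
  have h0 : (0 : ι → ℕ) ∈ S := by simp [hS, hn]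
  have e1 : ∑ a ∈ S, W y a = 1 + ∑ a ∈ S, ∑ i, V y i a := by
    rw [← Finset.add_sum_erase _ _ h0, ← Finset.add_sum_erase S (fun a => ∑ i, V y i a) h0]
    rw [Finset.sum_congr rfl (fun a ha => (sum_V y a (ne_of_mem_erase ha)))]
    have hW : W y 0 = 1 := by simp [W]
    have hV : ∑ i, V y i 0 = 0 := by simp [V]
    rw [hW, hV, zero_add]
  have e2 : ∑ a ∈ S, W y a = ∑ i, ∑ b ∈ S, y i * W y b := by
    simp_rw [← Finset.mul_sum]
    rw [← Finset.sum_mul, hy, one_mul]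
  have e3 : ∀ i, ∑ b ∈ S, y i * W y b =
      ∑ b ∈ S.filter (fun b => b i + 1 = n i), y i * W y b + ∑ a ∈ S, V y i a := by
    intro i
    rw [sum_box, Finset.sum_filter_add_sum_filter_not]
  rw [Finset.sum_comm] at e1
  rw [Finset.sum_congr rfl (fun i _ => e3 i), Finset.sum_add_distrib] at e2
  linarith

lemma reidx (n : ι → ℕ) (hn : ∀ j, 0 < n j) (j : ι) (f : (ι → ℕ) → ℝ) :
    ∑ b ∈ (Fintype.piFinset (fun k => range (n k))).filter (fun b => b j + 1 = n j), f b =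
    ∑ a ∈ Fintype.piFinset (fun k => range (if k = j then 1 else n k)),
      f (Function.update a j (n j - 1)) := by
  symm
  have hj := hn j
  refine Finset.sum_nbij' (fun a => Function.update a j (n j - 1))
    (fun b => Function.update b j 0) ?_ ?_ ?_ ?_ ?_
  · intro a ha
    simp only [mem_filter, Fintype.mem_piFinset, mem_range] at ha ⊢
    refine ⟨fun k => ?_, by simp; omega⟩
    have := ha k
    by_cases hk : k = j
    · subst hk; simp; omega
    · simpa [hk] using this
  · intro a ha
    simp only [mem_filter, Fintype.mem_piFinset, mem_range] at ha ⊢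
    intro k
    have := ha.1 k
    by_cases hk : k = j
    · subst hk; simp
    · simpa [hk] using this
  · intro a ha
    simp only [Fintype.mem_piFinset, mem_range] at ha
    have := ha j
    simp at this
    simp [← this]
  · intro b hb
    simp only [mem_filter] at hb
    have : n j - 1 = b j := by omega
    simp [this]
  · intro _ _; rfl

end PF

theorem stmt3 (r : ℕ) (hr : 1 ≤ r) (n : Fin r → ℕ) (hn : ∀ j, 0 < n j)
    (x : Fin r → ℝ) (hx : ∀ j, x j ≠ 0) (hs : (∑ j, x j) ≠ 0) :
    ∏ j, (x j) ^ (-(n j : ℤ)) =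
    ∑ j, ∑ a ∈ Fintype.piFinset (fun k => Finset.range (if k = j then 1 else n k)),
      (((n j + (∑ k ∈ Finset.univ.erase j, a k) - 1).factorial : ℝ) / ((n j - 1).factorial : ℝ)
          * ∏ k ∈ Finset.univ.erase j, (1 : ℝ) / ((a k).factorial : ℝ))
        * (∑ i, x i) ^ (-((n j : ℤ) + ∑ k ∈ Finset.univ.erase j, (a k : ℤ)))
        * ∏ k ∈ Finset.univ.erase j, (x k) ^ (-((n k : ℤ) - (a k : ℤ))) := by
  set s := ∑ i, x i with hsdef
  have hy : ∑ i, x i / s = 1 := by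
    rw [← Finset.sum_div, div_self hs]
  have key := PF.main (fun i => x i / s) hy n hn
  refine (mul_one _).symm.trans ?_
  refine (congrArg (fun t => _ * t) key.symm).trans ?_
  rw [Finset.mul_sum]
  refine Finset.sum_congr rfl fun j _ => ?_
  rw [PF.reidx n hn j, Finset.mul_sum]
  refine Finset.sum_congr rfl fun a _ => ?_
  unfold PF.W
  rw [PF.sum_split _ j, ← Finset.mul_prod_erase _ _ (Finset.mem_univ j),
    ← Finset.mul_prod_erase Finset.univ (fun k => (x k / s) ^ _ / _) (Finset.mem_univ j),
    Finset.sum_congr rfl (PF.erase_upd a j _ (fun _ m => m)),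
    Finset.prod_congr rfl
      (PF.erase_upd a j _ (fun k m => (x k / s) ^ m / (m.factorial : ℝ)))]
  simp only [Function.update_self]
  have hj := hn j
  rw [show n j - 1 + ∑ k ∈ Finset.univ.erase j, a k
    = n j + ∑ k ∈ Finset.univ.erase j, a k - 1 by omega]
  have e1 : ∏ k ∈ Finset.univ.erase j, (x k) ^ (-((n k : ℤ) - (a k : ℤ)))
      = (∏ k ∈ Finset.univ.erase j, (x k) ^ (-(n k : ℤ))) *
        ∏ k ∈ Finset.univ.erase j, (x k) ^ (a k) := by
    rw [← Finset.prod_mul_distrib]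
    refine Finset.prod_congr rfl fun k _ => ?_
    rw [neg_sub, sub_eq_neg_add, zpow_add₀ (hx k), zpow_natCast]
  have e2 : s ^ (-((n j : ℤ) + ∑ k ∈ Finset.univ.erase j, (a k : ℤ)))
      = (s ^ n j)⁻¹ * (∏ k ∈ Finset.univ.erase j, s ^ a k)⁻¹ := by
    rw [Finset.prod_pow_eq_pow_sum, ← mul_inv, ← pow_add, zpow_neg, ← zpow_natCast]
    push_cast
    rfl
  have e3 : ∏ k ∈ Finset.univ.erase j, (x k / s) ^ a k / ((a k).factorial : ℝ)
      = (∏ k ∈ Finset.univ.erase j, (x k) ^ (a k)) * (∏ k ∈ Finset.univ.erase j, s ^ a k)⁻¹ *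
        ∏ k ∈ Finset.univ.erase j, (1 : ℝ) / ((a k).factorial : ℝ) := by
    rw [← Finset.prod_inv_distrib, ← Finset.prod_mul_distrib, ← Finset.prod_mul_distrib]
    refine Finset.prod_congr rfl fun k _ => ?_
    rw [div_pow]; ring
  have e4 : x j ^ (-(n j : ℤ)) * ((x j / s) * (x j / s) ^ (n j - 1)) = (s ^ n j)⁻¹ := by
    rw [mul_pow_sub_one hj.ne', div_pow, zpow_neg, zpow_natCast]
    have := hx j
    field_simp
  rw [e1, e2, e3, ← e4]
  ring
end

section
/- Let s1 be a nonnegative integer and s2, s3, s4 be positive integers. Then ζ_so(s1,s2,s3,s4) = ∑_{a2=0}^{s2−1} C(s3+a2−1, a2) · ζ_so(s1, s2−a2, 0, s4+s3+a2) + ∑_{a3=0}^{s3−1} C(s2+a3−1, a3) · ζ_so(s1, 0, s3−a3, s4+s2+a3), where C(n,k) denotes the binomial coefficient. -/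
noncomputable def zetaSO (s1 s2 s3 s4 : ℕ) : ℝ :=
  ∑' (m : ℕ+) (n : ℕ+),
    1 / ((m : ℝ) ^ s1 * (n : ℝ) ^ s2 * ((m : ℝ) + (n : ℝ)) ^ s3 * ((m : ℝ) + 2 * (n : ℝ)) ^ s4)

noncomputable def soTerm (s1 s2 s3 s4 : ℕ) (p : ℕ+ × ℕ+) : ℝ :=
  1 / ((p.1 : ℝ) ^ s1 * (p.2 : ℝ) ^ s2 * ((p.1 : ℝ) + (p.2 : ℝ)) ^ s3 *
    ((p.1 : ℝ) + 2 * (p.2 : ℝ)) ^ s4)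

theorem zetaSO_eq (s1 s2 s3 s4 : ℕ) (h : Summable (soTerm s1 s2 s3 s4)) :
    zetaSO s1 s2 s3 s4 = ∑' p, soTerm s1 s2 s3 s4 p := by
  rw [h.tsum_prod]; rfl

theorem so_base_summable :
    Summable (fun p : ℕ+ × ℕ+ => 1 / ((p.2 : ℝ) * ((p.1 : ℝ) + 2 * (p.2 : ℝ)) ^ 2)) := by
  have h0 : Summable (fun n : ℕ+ => 1 / ((n : ℕ) : ℝ) ^ (3/2 : ℝ)) :=
    (Real.summable_one_div_nat_rpow.2 (by norm_num : (1:ℝ) < 3/2)).comp_injective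
      PNat.coe_injective
  have h1 := h0.mul_of_nonneg h0 (fun n => by positivity) (fun n => by positivity)
  refine h1.of_nonneg_of_le (fun p => by positivity) ?_
  rintro ⟨m, n⟩
  have hm : (0:ℝ) < (m : ℕ) := by exact_mod_cast m.pos
  have hn : (0:ℝ) < (n : ℕ) := by exact_mod_cast n.pos
  simp only
  generalize ((m : ℕ) : ℝ) = x at *
  generalize ((n : ℕ) : ℝ) = y at *
  rw [div_mul_div_comm, one_mul]
  apply one_div_le_one_div_of_le (by positivity)
  have e1 : x ^ (3/2:ℝ) ≤ (x + 2*y) ^ (3/2:ℝ) :=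
    Real.rpow_le_rpow hm.le (by linarith) (by norm_num)
  have e2 : y ^ (1/2:ℝ) ≤ (x + 2*y) ^ (1/2:ℝ) :=
    Real.rpow_le_rpow hn.le (by linarith) (by norm_num)
  have e3 : y ^ (3/2:ℝ) = y * y ^ (1/2:ℝ) := by
    rw [← Real.rpow_one_add' hn.le (by norm_num)]; norm_num
  have e4 : (x + 2*y) ^ 2 = (x + 2*y) ^ (3/2:ℝ) * (x + 2*y) ^ (1/2:ℝ) := by
    rw [← Real.rpow_add (by positivity), ← Real.rpow_natCast]; norm_num
  rw [e3, e4]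
  calc x ^ (3/2:ℝ) * (y * y ^ (1/2:ℝ)) = y * (x ^ (3/2:ℝ) * y ^ (1/2:ℝ)) := by ring
    _ ≤ _ := by gcongr

theorem so_summable (s1 s2 s3 s4 : ℕ) (h : 1 ≤ s2 ∨ 1 ≤ s3) (h4 : 2 ≤ s4) :
    Summable (soTerm s1 s2 s3 s4) := by
  refine so_base_summable.of_nonneg_of_le (fun p => by unfold soTerm; positivity) ?_
  rintro ⟨m, n⟩
  have hm : (1:ℝ) ≤ (m : ℕ) := by exact_mod_cast m.pos
  have hn : (1:ℝ) ≤ (n : ℕ) := by exact_mod_cast n.pos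
  simp only [soTerm]
  generalize ((m : ℕ) : ℝ) = x at *
  generalize ((n : ℕ) : ℝ) = y at *
  apply one_div_le_one_div_of_le (by positivity)
  have a1 : 1 ≤ x ^ s1 := one_le_pow₀ hm
  have a4 : (x + 2*y)^2 ≤ (x+2*y)^s4 := pow_le_pow_right₀ (by linarith) h4
  have a2 : y ≤ y ^ s2 * (x + y) ^ s3 := by
    rcases h with h | h
    · have b := le_self_pow₀ hn (show s2 ≠ 0 by omega)
      have c : 1 ≤ (x + y) ^ s3 := one_le_pow₀ (by linarith)
      nlinarith
    · have b := le_self_pow₀ (show 1 ≤ x + y by linarith) (show s3 ≠ 0 by omega)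
      have c : 1 ≤ y ^ s2 := one_le_pow₀ hn
      nlinarith
  calc y * (x+2*y)^2 = 1 * y * (x+2*y)^2 := by ring
    _ ≤ x ^ s1 * (y ^ s2 * (x + y) ^ s3) * (x+2*y)^s4 := by gcongr
    _ = _ := by ring

theorem so_S (p : ℝ) (b n : ℕ) :
    (1 - p) * ∑ i ∈ Finset.range n, ((b + 1 + i).choose i : ℝ) * p ^ i =
      ∑ i ∈ Finset.range n, ((b + i).choose i : ℝ) * p ^ i - ((b + n).choose (b + 1) : ℝ) * p ^ n := by
  induction n with
  | zero => simp
  | succ n ih =>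
    rw [Finset.sum_range_succ, Finset.sum_range_succ, mul_add, ih]
    have e1 : (b + 1 + n).choose n = (b + n).choose n + (b + n).choose (b + 1) := by
      rw [Nat.choose_symm_add.symm, Nat.choose_symm_add.symm,
        show b + 1 + n = b + n + 1 by ring, Nat.choose_succ_succ]
    have e2 : (b + (n + 1)).choose (b + 1) = (b + n).choose n + (b + n).choose (b + 1) := by
      rw [← e1, ← Nat.choose_symm_add]; congr 1; ring
    rw [e1, e2]; push_cast; ring

theorem so_G (p q : ℝ) (h : p + q = 1) (a b : ℕ) :
    q ^ (b + 1) * ∑ i ∈ Finset.range (a + 1), ((b + i).choose i : ℝ) * p ^ i +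
      p ^ (a + 1) * ∑ i ∈ Finset.range (b + 1), ((a + i).choose i : ℝ) * q ^ i = 1 := by
  have hq : q = 1 - p := by linarith
  induction b with
  | zero =>
    have := mul_neg_geom_sum p (a + 1)
    simp [hq, this]
  | succ b ih =>
    have := so_S p b (a + 1)
    rw [← hq] at this
    rw [Finset.sum_range_succ _ (b + 1), pow_succ q (b + 1), mul_assoc, this, ← ih]
    rw [show b + (a + 1) = a + (b + 1) by ring]; ring

theorem so_pf (x y : ℝ) (hx : 0 < x) (hy : 0 < y) (a b : ℕ) (ha : 0 < a) (hb : 0 < b) :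
    1 / (x ^ a * y ^ b) =
      (∑ i ∈ Finset.range a, ((b + i - 1).choose i : ℝ) * (1 / (x ^ (a - i) * (x + y) ^ (b + i)))) +
      ∑ i ∈ Finset.range b, ((a + i - 1).choose i : ℝ) * (1 / (y ^ (b - i) * (x + y) ^ (a + i))) := by
  obtain ⟨a, rfl⟩ := Nat.exists_eq_add_of_lt ha
  obtain ⟨b, rfl⟩ := Nat.exists_eq_add_of_lt hb
  simp only [zero_add]
  have hz : 0 < x + y := by positivity
  have key := so_G (x / (x + y)) (y / (x + y)) (by field_simp) a b
  have kk : ∀ c : ℝ, c * (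
      (y / (x + y)) ^ (b + 1) * ∑ i ∈ Finset.range (a + 1), ((b + i).choose i : ℝ) * (x / (x + y)) ^ i +
      (x / (x + y)) ^ (a + 1) * ∑ i ∈ Finset.range (b + 1), ((a + i).choose i : ℝ) * (y / (x + y)) ^ i)
      = c := fun c => by rw [key, mul_one]
  rw [← kk (1 / (x ^ (a + 1) * y ^ (b + 1))), mul_add, Finset.mul_sum, Finset.mul_sum, Finset.mul_sum,
    Finset.mul_sum]
  have aux : ∀ (x y : ℝ), 0 < x → 0 < y → ∀ z, 0 < z → ∀ a b : ℕ, ∀ i ∈ Finset.range (a + 1),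
      1 / (x ^ (a + 1) * y ^ (b + 1)) * ((y / z) ^ (b + 1) * (((b + i).choose i : ℝ) * (x / z) ^ i))
      = ((b + 1 + i - 1).choose i : ℝ) * (1 / (x ^ (a + 1 - i) * z ^ (b + 1 + i))) := by
    intro x y hx hy z hz a b i hi
    have hi' := Finset.mem_range.1 hi
    obtain ⟨k, hk⟩ := Nat.exists_eq_add_of_le hi'.le
    rw [hk, show i + k - i = k by omega, show b + 1 + i - 1 = b + i by omega, div_pow, div_pow,
      pow_add x, pow_add z (b + 1)]
    field_simp
  congr 1
  · exact Finset.sum_congr rfl (aux x y hx hy _ hz a b)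
  · refine Finset.sum_congr rfl fun i hi => ?_
    rw [← aux y x hy hx _ hz b a i hi, mul_comm (x ^ _)]

theorem so_term (s1 s2 s3 s4 : ℕ) (h2 : 0 < s2) (h3 : 0 < s3) (p : ℕ+ × ℕ+) :
    soTerm s1 s2 s3 s4 p =
      (∑ a2 ∈ Finset.range s2,
        (Nat.choose (s3 + a2 - 1) a2 : ℝ) * soTerm s1 (s2 - a2) 0 (s4 + s3 + a2) p) +
      ∑ a3 ∈ Finset.range s3,
        (Nat.choose (s2 + a3 - 1) a3 : ℝ) * soTerm s1 0 (s3 - a3) (s4 + s2 + a3) p := by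
  obtain ⟨m, n⟩ := p
  have hm : (0:ℝ) < (m : ℕ) := by exact_mod_cast m.pos
  have hn : (0:ℝ) < (n : ℕ) := by exact_mod_cast n.pos
  simp only [soTerm]
  generalize ((m : ℕ) : ℝ) = x at *
  generalize ((n : ℕ) : ℝ) = y at *
  have key := so_pf y (x + y) hn (by positivity) s2 s3 h2 h3
  rw [show y + (x + y) = x + 2 * y by ring] at key
  have e : 1 / (x ^ s1 * y ^ s2 * (x + y) ^ s3 * (x + 2 * y) ^ s4) =
      1 / (x ^ s1 * (x + 2 * y) ^ s4) * (1 / (y ^ s2 * (x + y) ^ s3)) := by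
    rw [div_mul_div_comm]; congr 1 <;> ring
  rw [e, key, mul_add, Finset.mul_sum, Finset.mul_sum]
  congr 1 <;> refine Finset.sum_congr rfl fun i _ => ?_
  · rw [mul_left_comm, div_mul_div_comm]; congr 2 <;> ring
  · rw [mul_left_comm, div_mul_div_comm]; congr 2 <;> ring

theorem stmt7 (s1 s2 s3 s4 : ℕ) (h2 : 0 < s2) (h3 : 0 < s3) (h4 : 0 < s4) :
    zetaSO s1 s2 s3 s4 =
      (∑ a2 ∈ Finset.range s2,
        (Nat.choose (s3 + a2 - 1) a2 : ℝ) * zetaSO s1 (s2 - a2) 0 (s4 + s3 + a2)) +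
      ∑ a3 ∈ Finset.range s3,
        (Nat.choose (s2 + a3 - 1) a3 : ℝ) * zetaSO s1 0 (s3 - a3) (s4 + s2 + a3) := by
  have H1 : ∀ a ∈ Finset.range s2, HasSum (fun p => (Nat.choose (s3 + a - 1) a : ℝ) *
      soTerm s1 (s2 - a) 0 (s4 + s3 + a) p)
      ((Nat.choose (s3 + a - 1) a : ℝ) * zetaSO s1 (s2 - a) 0 (s4 + s3 + a)) := by
    intro a ha
    have ha' := Finset.mem_range.1 ha
    have hs := so_summable s1 (s2 - a) 0 (s4 + s3 + a) (by omega) (by omega)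
    rw [zetaSO_eq _ _ _ _ hs]
    exact hs.hasSum.mul_left _
  have H2 : ∀ a ∈ Finset.range s3, HasSum (fun p => (Nat.choose (s2 + a - 1) a : ℝ) *
      soTerm s1 0 (s3 - a) (s4 + s2 + a) p)
      ((Nat.choose (s2 + a - 1) a : ℝ) * zetaSO s1 0 (s3 - a) (s4 + s2 + a)) := by
    intro a ha
    have ha' := Finset.mem_range.1 ha
    have hs := so_summable s1 0 (s3 - a) (s4 + s2 + a) (by omega) (by omega)
    rw [zetaSO_eq _ _ _ _ hs]
    exact hs.hasSum.mul_left _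
  have H := (hasSum_sum H1).add (hasSum_sum H2)
  have H' : HasSum (soTerm s1 s2 s3 s4) _ :=
    H.congr_fun (fun p => so_term s1 s2 s3 s4 h2 h3 p)
  rw [zetaSO_eq _ _ _ _ H'.summable]
  exact H'.tsum_eq
end

section
/- Let s1 and s4 be positive integers and s3 a nonnegative integer with s3+s4 > 1. Then ζ_so(s1,0,s3,s4) = ∑_{a1=0}^{s1−1} C(s4+a1−1, a1) · 2^{−(s4+a1)} · ζ(s3+s4+a1, s1−a1) + ∑_{a4=0}^{s4−1} C(s1+a4−1, a4) · 2^{−(s1+a4)} · ζ_so(0, 0, s3+s1+a4, s4−a4), where C(n,k) denotes the binomial coefficient and ζ(a,b) = ∑_{m>n≥1} 1/(m^a n^b) is the double zeta value. -/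
/-- Depth-two alternating Euler sum `ζ(s1,s2; x1,x2)`, summing over `m1 = n + k > m2 = n ≥ 1`.
The double zeta value `ζ(a,b)` is `es2 a b 1 1`. -/
noncomputable def es2 (s1 s2 : ℕ) (x1 x2 : ℝ) : ℝ :=
  ∑' (n : ℕ+) (k : ℕ+),
    x1 ^ ((n : ℕ) + (k : ℕ)) * x2 ^ (n : ℕ) / (((n : ℝ) + (k : ℝ)) ^ s1 * (n : ℝ) ^ s2)

noncomputable def pfA (w u : ℝ) (p q : ℕ) : ℝ :=
  ∑ a ∈ Finset.range p, (Nat.choose (q + a - 1) a : ℝ) * w ^ (q + a) * u ^ (p - a)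

theorem pfA_rec (w u : ℝ) (p q : ℕ) :
    pfA w u (p+1) (q+1) = w * (pfA w u p (q+1) + pfA w u (p+1) q) := by
  unfold pfA
  rw [Finset.sum_range_succ', Finset.sum_range_succ' _ p]
  rw [← add_assoc, ← Finset.sum_add_distrib, mul_add, Finset.mul_sum]
  congr 1
  · apply Finset.sum_congr rfl
    intro a _
    have e1 : q + 1 + (a + 1) - 1 = (q + a) + 1 := by omega
    have e2 : q + 1 + a - 1 = q + a := by omega
    have e3 : q + (a + 1) - 1 = q + a := by omega
    rw [e1, e2, e3, Nat.choose_succ_succ, Nat.add_sub_add_right]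
    push_cast
    ring
  · simp
    ring

theorem pfA_zero (w u : ℝ) (q : ℕ) : pfA w u 0 q = 0 := by simp [pfA]

theorem pfA_zero_right (w u : ℝ) (p : ℕ) : pfA w u (p+1) 0 = u ^ (p+1) := by
  unfold pfA
  rw [Finset.sum_range_succ']
  simp

theorem pf_aux (w u v : ℝ) (h : u * v = w * (u + v)) (p : ℕ) : ∀ q : ℕ, 0 < p + q →
    u ^ p * v ^ q = pfA w u p q + pfA w v q p := by
  induction p with
  | zero =>
    intro q hq
    obtain ⟨q, rfl⟩ : ∃ k, q = k + 1 := ⟨q - 1, by omega⟩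
    rw [pfA_zero, pfA_zero_right]; simp
  | succ p ihp =>
    intro q
    induction q with
    | zero => intro _; rw [pfA_zero, pfA_zero_right]; simp
    | succ q ihq =>
      intro _
      rw [pfA_rec, pfA_rec]
      have h1 := ihp (q+1) (by omega)
      have h2 := ihq (by omega)
      have : u ^ (p+1) * v ^ (q+1) = w * (u ^ p * v ^ (q+1) + u ^ (p+1) * v ^ q) := by
        calc _ = u ^ p * v ^ q * (u * v) := by ring
          _ = _ := by rw [h]; ring
      rw [this, h1, h2]; ring

theorem summable_dom :
    Summable (fun p : ℕ+ × ℕ+ => 1 / (((p.1 : ℝ) + (p.2 : ℝ)) ^ 2 * (p.1 : ℝ))) := by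
  have h0 : Summable (fun n : ℕ+ => 1 / ((n : ℝ) ^ (3/2 : ℝ))) :=
    (Real.summable_one_div_nat_rpow.2 (by norm_num : (1:ℝ) < 3/2)).comp_injective
      PNat.coe_injective
  have h1 := h0.mul_of_nonneg h0 (fun n => by positivity) (fun n => by positivity)
  refine Summable.of_nonneg_of_le (fun p => by positivity) (fun p => ?_) h1
  obtain ⟨m, n⟩ := p
  have hm : (0:ℝ) < m := by exact_mod_cast m.pos
  have hn : (0:ℝ) < n := by exact_mod_cast n.pos
  simp only
  rw [one_div_mul_one_div_rev]
  apply one_div_le_one_div_of_le (by positivity)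
  have e : ∀ x : ℝ, 0 < x → (x ^ (3/2:ℝ)) ^ 2 = x ^ 3 := by
    intro x hx
    rw [← Real.rpow_natCast, ← Real.rpow_mul hx.le, ← Real.rpow_natCast]; norm_num
  refine (pow_le_pow_iff_left₀ (by positivity) (by positivity) two_ne_zero).1 ?_
  rw [mul_pow, e _ hm, e _ hn]
  have : (n:ℝ)^3 ≤ (m + n : ℝ)^3 := by gcongr; linarith
  have h2 : (m:ℝ) ≤ m + n := by linarith
  calc (n:ℝ)^3 * m^3 ≤ (m+n)^3 * (m^2 * (m+n)) := by
        have : (m:ℝ)^3 ≤ m^2*(m+n) := by nlinarith [sq_nonneg (m:ℝ)]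
        gcongr
    _ = _ := by ring

theorem summable_es (A B : ℕ) (hA : 2 ≤ A) (hB : 1 ≤ B) :
    Summable (fun p : ℕ+ × ℕ+ => 1 / (((p.1 : ℝ) + (p.2 : ℝ)) ^ A * (p.1 : ℝ) ^ B)) := by
  refine Summable.of_nonneg_of_le (fun p => by positivity) (fun p => ?_) summable_dom
  obtain ⟨m, n⟩ := p
  have hm : (1:ℝ) ≤ m := by exact_mod_cast m.pos
  have hn : (1:ℝ) ≤ n := by exact_mod_cast n.pos
  apply one_div_le_one_div_of_le (by positivity)
  have h1 : ((m:ℝ)+n)^2 ≤ ((m:ℝ)+n)^A := pow_le_pow_right₀ (by linarith) hA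
  have h2 : (m:ℝ) ≤ (m:ℝ)^B := le_self_pow₀ hm (by omega)
  simp only
  gcongr

theorem summable_so (A B : ℕ) (hA : 1 ≤ A) (hAB : 3 ≤ A + B) :
    Summable (fun p : ℕ+ × ℕ+ =>
      1 / (((p.1 : ℝ) + (p.2 : ℝ)) ^ A * ((p.1 : ℝ) + 2 * (p.2 : ℝ)) ^ B)) := by
  refine Summable.of_nonneg_of_le (fun p => by positivity) (fun p => ?_) summable_dom
  obtain ⟨m, n⟩ := p
  have hm : (1:ℝ) ≤ m := by exact_mod_cast m.pos
  have hn : (1:ℝ) ≤ n := by exact_mod_cast n.pos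
  apply one_div_le_one_div_of_le (by positivity)
  simp only
  calc ((m:ℝ)+n)^2 * m ≤ ((m:ℝ)+n)^2 * (m+n) := by gcongr; linarith
    _ = ((m:ℝ)+n)^3 := by ring
    _ ≤ ((m:ℝ)+n)^(A+B) := pow_le_pow_right₀ (by linarith) hAB
    _ = ((m:ℝ)+n)^A * ((m:ℝ)+n)^B := pow_add _ _ _
    _ ≤ _ := by gcongr; linarith

theorem es2_eq (A B : ℕ) (hA : 2 ≤ A) (hB : 1 ≤ B) : es2 A B 1 1 =
    ∑' p : ℕ+ × ℕ+, 1 / (((p.1 : ℝ) + (p.2 : ℝ)) ^ A * (p.1 : ℝ) ^ B) := by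
  rw [(summable_es A B hA hB).tsum_prod]
  simp [es2]

theorem so_eq (A B : ℕ) (hA : 1 ≤ A) (hAB : 3 ≤ A + B) : zetaSO 0 0 A B =
    ∑' p : ℕ+ × ℕ+, 1 / (((p.1 : ℝ) + (p.2 : ℝ)) ^ A * ((p.1 : ℝ) + 2 * (p.2 : ℝ)) ^ B) := by
  rw [(summable_so A B hA hAB).tsum_prod]
  simp [zetaSO]

theorem pf_term (s1 s3 s4 : ℕ) (h1 : 0 < s1) (m n : ℝ) (hm : 0 < m) (hn : 0 < n) :
    1 / (m ^ s1 * n ^ 0 * (m + n) ^ s3 * (m + 2 * n) ^ s4) =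
      (∑ a1 ∈ Finset.range s1,
        ((Nat.choose (s4 + a1 - 1) a1 : ℝ) * 2 ^ (-((s4 : ℤ) + a1))) *
          (1 / ((m + n) ^ (s3 + s4 + a1) * m ^ (s1 - a1)))) +
      ∑ a4 ∈ Finset.range s4,
        ((Nat.choose (s1 + a4 - 1) a4 : ℝ) * 2 ^ (-((s1 : ℤ) + a4))) *
          (1 / ((m + n) ^ (s3 + s1 + a4) * (m + 2 * n) ^ (s4 - a4))) := by
  have hy : 0 < m + 2 * n := by positivity
  have hs : 0 < m + n := by positivity
  have key := pf_aux ((2 * (m + n))⁻¹) m⁻¹ (m + 2 * n)⁻¹ (by field_simp; ring) s1 s4 (by omega)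
  have : 1 / (m ^ s1 * n ^ 0 * (m + n) ^ s3 * (m + 2 * n) ^ s4)
      = ((m + n)⁻¹) ^ s3 * (m⁻¹ ^ s1 * (m + 2 * n)⁻¹ ^ s4) := by
    simp only [inv_pow, pow_zero]; field_simp
  have e : ∀ k j : ℕ, (2:ℝ) ^ (-((k : ℤ) + j)) = (2 ^ (k + j))⁻¹ := by
    intro k j
    rw [zpow_neg, ← Nat.cast_add, zpow_natCast]
  rw [this, key, pfA, pfA, mul_add, Finset.mul_sum, Finset.mul_sum]
  congr 1 <;>
  · apply Finset.sum_congr rfl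
    intro a _
    rw [e, add_assoc s3, pow_add _ s3]
    simp only [mul_inv, inv_pow, mul_pow, one_div]
    ring

theorem stmt9 (s1 s3 s4 : ℕ) (h1 : 0 < s1) (h4 : 0 < s4) (h34 : 1 < s3 + s4) :
    zetaSO s1 0 s3 s4 =
      (∑ a1 ∈ Finset.range s1,
        (Nat.choose (s4 + a1 - 1) a1 : ℝ) * 2 ^ (-((s4 : ℤ) + a1)) *
          es2 (s3 + s4 + a1) (s1 - a1) 1 1) +
      ∑ a4 ∈ Finset.range s4,
        (Nat.choose (s1 + a4 - 1) a4 : ℝ) * 2 ^ (-((s1 : ℤ) + a4)) *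
          zetaSO 0 0 (s3 + s1 + a4) (s4 - a4) := by
  have S1 : ∀ a ∈ Finset.range s1, Summable (fun p : ℕ+ × ℕ+ =>
      ((Nat.choose (s4 + a - 1) a : ℝ) * 2 ^ (-((s4 : ℤ) + a))) *
      (1 / (((p.1 : ℝ) + (p.2 : ℝ)) ^ (s3 + s4 + a) * (p.1 : ℝ) ^ (s1 - a)))) := by
    intro a ha
    rw [Finset.mem_range] at ha
    exact (summable_es _ _ (by omega) (by omega)).mul_left _
  have S2 : ∀ a ∈ Finset.range s4, Summable (fun p : ℕ+ × ℕ+ =>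
      ((Nat.choose (s1 + a - 1) a : ℝ) * 2 ^ (-((s1 : ℤ) + a))) *
      (1 / (((p.1 : ℝ) + (p.2 : ℝ)) ^ (s3 + s1 + a) *
        ((p.1 : ℝ) + 2 * (p.2 : ℝ)) ^ (s4 - a)))) := by
    intro a ha
    rw [Finset.mem_range] at ha
    exact (summable_so _ _ (by omega) (by omega)).mul_left _
  have T := (summable_sum S1).add (summable_sum S2)
  have E := T.tsum_prod
  rw [(summable_sum S1).tsum_add (summable_sum S2), Summable.tsum_finsetSum S1,
    Summable.tsum_finsetSum S2] at E
  have L := Eq.trans (show zetaSO s1 0 s3 s4 = _ from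
    tsum_congr fun m => tsum_congr fun n =>
      pf_term s1 s3 s4 h1 m n (by exact_mod_cast m.pos) (by exact_mod_cast n.pos)) E.symm
  rw [L]
  congr 1
  · refine Finset.sum_congr rfl fun a ha => ?_
    rw [Finset.mem_range] at ha
    rw [tsum_mul_left, es2_eq _ _ (by omega) (by omega)]
  · refine Finset.sum_congr rfl fun a ha => ?_
    rw [Finset.mem_range] at ha
    rw [tsum_mul_left, so_eq _ _ (by omega) (by omega)]
end

section
/- For all integers u ≥ 1 and v ≥ 2, ∑_{m,n=1}^∞ 1/(n^u (m+2n)^v) = 2^{u−1} · ( ζ(v,u; 1,1) + ζ(v,u; 1,−1) ). -/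
theorem aux_bound (u v : ℕ) (hu : 1 ≤ u) (hv : 2 ≤ v) (a b : ℝ) (ha : 1 ≤ a) (hb : 1 ≤ b) :
    1 / ((a + b) ^ v * a ^ u) ≤ (a ^ (3/2 : ℝ))⁻¹ * (b ^ (3/2 : ℝ))⁻¹ := by
  have ha0 : 0 < a := by linarith
  have hb0 : 0 < b := by linarith
  rw [← mul_inv, ← one_div]
  apply one_div_le_one_div_of_le (by positivity)
  have h1 : a ^ (3/2 : ℝ) = a ^ (1/2 : ℝ) * a := by
    rw [← Real.rpow_add_one ha0.ne']; norm_num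
  have h2 : (a + b) ^ 2 = (a + b) ^ (1/2 : ℝ) * (a + b) ^ (3/2 : ℝ) := by
    rw [← Real.rpow_add (by linarith), ← Real.rpow_natCast]; norm_num
  calc a ^ (3/2 : ℝ) * b ^ (3/2 : ℝ) = (a ^ (1/2 : ℝ) * b ^ (3/2 : ℝ)) * a := by rw [h1]; ring
    _ ≤ ((a + b) ^ (1/2 : ℝ) * (a + b) ^ (3/2 : ℝ)) * a := by
        gcongr <;> linarith
    _ = (a + b) ^ 2 * a ^ 1 := by rw [h2, pow_one]
    _ ≤ (a + b) ^ v * a ^ u := by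
        gcongr <;> linarith

theorem aux_summable (u v : ℕ) (hu : 1 ≤ u) (hv : 2 ≤ v) :
    Summable (fun p : ℕ+ × ℕ+ => 1 / (((p.1 : ℝ) + (p.2 : ℝ)) ^ v * (p.1 : ℝ) ^ u)) := by
  have h : Summable (fun n : ℕ+ => ((n : ℝ) ^ (3/2 : ℝ))⁻¹) :=
    (Real.summable_nat_rpow_inv.2 (by norm_num : (1:ℝ) < 3/2)).comp_injective
      PNat.coe_injective
  refine Summable.of_nonneg_of_le (fun p => by positivity) (fun p => ?_)
    (h.mul_of_nonneg h (fun n => by positivity) (fun n => by positivity))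
  exact aux_bound u v hu hv _ _ (by exact_mod_cast (one_le : 1 ≤ p.1)) (by exact_mod_cast (one_le : 1 ≤ p.2))

theorem stmt10 (u v : ℕ) (hu : 1 ≤ u) (hv : 2 ≤ v) :
    (∑' (m : ℕ+) (n : ℕ+), 1 / ((n : ℝ) ^ u * ((m : ℝ) + 2 * (n : ℝ)) ^ v)) =
      2 ^ (u - 1) * (es2 v u 1 1 + es2 v u 1 (-1)) := by
  have hF := aux_summable u v hu hv
  obtain ⟨S, hS⟩ : ∃ S : ℕ+ → ℝ, S = fun n : ℕ+ => ∑' k : ℕ+, 1 / (((n : ℝ) + (k : ℝ)) ^ v * (n : ℝ) ^ u) := ⟨_, rfl⟩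
  have hSs : Summable S := by rw [hS]; exact hF.prod
  have hinj : Function.Injective (fun n : ℕ+ => 2 * n) := fun a b h => mul_left_cancel h
  have e1 : es2 v u 1 1 = ∑' n, S n := by simp [es2, hS]
  have e2 : es2 v u 1 (-1) = ∑' n : ℕ+, (-1) ^ (n : ℕ) * S n := by
    simp only [es2, hS, ← tsum_mul_left]
    refine tsum_congr fun n => tsum_congr fun k => ?_
    rw [one_pow]; ring
  have hSs' : Summable (fun n : ℕ+ => (-1 : ℝ) ^ (n : ℕ) * S n) := by
    apply Summable.of_norm
    simpa using hSs.norm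
  have e3 : es2 v u 1 1 + es2 v u 1 (-1) = ∑' n : ℕ+, 2 * S (2 * n) := by
    rw [e1, e2, ← hSs.tsum_add hSs']
    rw [← hinj.tsum_eq (f := fun n : ℕ+ => S n + (-1) ^ (n : ℕ) * S n)]
    · refine tsum_congr fun n => ?_
      simp [pow_mul]; ring
    · intro n hn
      rcases Nat.even_or_odd (n : ℕ) with h | h
      · obtain ⟨r, hr⟩ := h
        have := n.pos
        refine ⟨⟨r, by omega⟩, PNat.eq ?_⟩
        change 2 * r = (n : ℕ)
        omega
      · exfalso; apply hn; simp [h.neg_one_pow]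
  have hG : ∀ m n : ℕ+, 1 / ((n : ℝ) ^ u * ((m : ℝ) + 2 * (n : ℝ)) ^ v)
      = 2 ^ u * (1 / ((((2 * n : ℕ+) : ℝ) + (m : ℝ)) ^ v * ((2 * n : ℕ+) : ℝ) ^ u)) := by
    intro m n
    have : ((2 * n : ℕ+) : ℝ) = 2 * (n : ℝ) := by push_cast; rfl
    rw [this, mul_pow, add_comm (m : ℝ)]
    have : (0:ℝ) < n := by exact_mod_cast n.pos
    have : (0:ℝ) < m := by exact_mod_cast m.pos
    field_simp
  have hGs : Summable (fun p : ℕ+ × ℕ+ =>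
      2 ^ u * (1 / ((((2 * p.2 : ℕ+) : ℝ) + (p.1 : ℝ)) ^ v * ((2 * p.2 : ℕ+) : ℝ) ^ u))) := by
    refine Summable.mul_left _ (hF.comp_injective (i := fun p : ℕ+ × ℕ+ => (2 * p.2, p.1)) ?_)
    rintro ⟨a, b⟩ ⟨c, d⟩ h
    simp only [Prod.mk.injEq] at h
    exact Prod.ext h.2 (hinj h.1)
  simp only [hG]
  have hc := Summable.tsum_comm (f := fun n m : ℕ+ =>
      2 ^ u * (1 / ((((2 * n : ℕ+) : ℝ) + (m : ℝ)) ^ v * ((2 * n : ℕ+) : ℝ) ^ u))) hGs.prod_symm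
  rw [hc, e3, ← tsum_mul_left]
  refine tsum_congr fun n => ?_
  rw [tsum_mul_left, hS, ← mul_assoc, ← pow_succ, Nat.sub_add_cancel hu]
end

section
/- Let s ≥ 2 be an integer and for each positive integer N set S^(N) = ∑_{m=1}^N ∑_{n=1}^N ( 1/(n^s (m+2n)) − 1/(n^s (m+n)) ). Then lim_{N→∞} S^(N) = (1 − 2^{s−1}) · ( ζ(s+1) + ζ(s,1;1,1) ) − 2^{s−1} · ( ζ(s,1;−1,1) + ζ(s+1;−1) ). -/
noncomputable def rzeta (s : ℕ) : ℝ := ∑' m : ℕ+, 1 / (m : ℝ) ^ s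

/-- Depth-one alternating Euler sum `ζ(s; x)`. -/
noncomputable def es1 (s : ℕ) (x : ℝ) : ℝ := ∑' m : ℕ+, x ^ (m : ℕ) / (m : ℝ) ^ s

noncomputable def hh (n : ℕ) : ℝ := ∑ i ∈ Finset.range n, 1 / ((i : ℝ) + 1)

lemma hh_succ (n : ℕ) : hh (n + 1) = hh n + 1 / ((n : ℝ) + 1) := by
  simp [hh, Finset.sum_range_succ]

lemma hh_add (a N : ℕ) :
    ∑ m ∈ Finset.Icc 1 N, 1 / ((m : ℝ) + a) = hh (N + a) - hh a := by
  induction N with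
  | zero => simp
  | succ N ih =>
    rw [Finset.sum_Icc_succ_top (by omega), ih, show N + 1 + a = (N + a) + 1 by ring, hh_succ]
    push_cast
    ring

lemma hh_diff_nonneg (a b : ℕ) : 0 ≤ hh (a + b) - hh a := by
  induction b with
  | zero => simp
  | succ b ih =>
    rw [← add_assoc, hh_succ]
    have : (0 : ℝ) ≤ 1 / (((a + b : ℕ) : ℝ) + 1) := by positivity
    linarith

lemma hh_diff_le (a b : ℕ) (ha : 0 < a) : hh (a + b) - hh a ≤ (b : ℝ) / a := by
  have ha' : (0 : ℝ) < a := by exact_mod_cast ha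
  induction b with
  | zero => simp
  | succ b ih =>
    rw [← add_assoc, hh_succ]
    have : 1 / (((a + b : ℕ) : ℝ) + 1) ≤ 1 / (a : ℝ) := by
      apply one_div_le_one_div_of_le ha'
      push_cast
      have : (0 : ℝ) ≤ b := by positivity
      linarith
    push_cast at *
    rw [add_div]
    linarith

lemma summ2 (s : ℕ) (hs : 2 ≤ s) (x : ℝ) (hx : |x| = 1) :
    Summable (fun p : ℕ × ℕ => x ^ (p.1 + p.2 + 2) /
      (((p.1 : ℝ) + p.2 + 2) ^ s * ((p.1 : ℝ) + 1))) := by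
  have h1 : Summable (fun n : ℕ => 1 / ((n : ℝ) + 1) ^ (3 / 2 : ℝ)) := by
    have := (summable_nat_add_iff 1).2 (Real.summable_one_div_nat_rpow.2 (by norm_num : (1 : ℝ) < 3 / 2))
    simpa using this
  have h2 := h1.mul_of_nonneg h1 (fun n => by positivity) (fun n => by positivity)
  refine Summable.of_norm_bounded h2 ?_
  rintro ⟨i, j⟩
  simp only [norm_div, norm_pow, Real.norm_eq_abs, hx, one_pow]
  rw [abs_of_nonneg (by positivity), div_mul_div_comm, one_mul]
  apply one_div_le_one_div_of_le (by positivity)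
  have hi : (0 : ℝ) ≤ i := by positivity
  have hj : (0 : ℝ) ≤ j := by positivity
  set a : ℝ := (i : ℝ) + 1
  set b : ℝ := (j : ℝ) + 1
  have ha : 1 ≤ a := by simp [a]
  have hb : 1 ≤ b := by simp [b]
  have hab : (i : ℝ) + j + 2 = a + b := by simp only [a, b]; ring
  rw [hab]
  calc a ^ (3 / 2 : ℝ) * b ^ (3 / 2 : ℝ)
      = (a ^ (1 / 2 : ℝ) * b ^ (3 / 2 : ℝ)) * a := by
        rw [show (3 / 2 : ℝ) = 1 / 2 + 1 by norm_num, Real.rpow_add (by linarith : 0 < a), Real.rpow_one]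
        ring
    _ ≤ ((a + b) ^ (1 / 2 : ℝ) * (a + b) ^ (3 / 2 : ℝ)) * a := by
        gcongr <;> linarith
    _ = (a + b) ^ 2 * a := by
        rw [← Real.rpow_add (by linarith)]
        norm_num
    _ ≤ (a + b) ^ s * a := by
        gcongr
        linarith

lemma hasSum_h (s : ℕ) (hs : 2 ≤ s) (x : ℝ) (hx : |x| = 1) :
    HasSum (fun n : ℕ => x ^ n * hh n / (n : ℝ) ^ s) (es1 (s + 1) x + es2 s 1 x 1) := by
  have hS := summ2 s hs x hx
  have e2 : es2 s 1 x 1 = ∑' p : ℕ × ℕ, x ^ (p.1 + p.2 + 2) /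
      (((p.1 : ℝ) + p.2 + 2) ^ s * ((p.1 : ℝ) + 1)) := by
    rw [hS.tsum_prod, es2, tsum_pnat_eq_tsum_succ (f := fun n : ℕ => ∑' k : ℕ+,
      x ^ (n + (k : ℕ)) * 1 ^ n / (((n : ℝ) + (k : ℝ)) ^ s * (n : ℝ) ^ 1))]
    congr 1
    ext i
    rw [tsum_pnat_eq_tsum_succ (f := fun k : ℕ =>
      x ^ (i + 1 + k) * 1 ^ (i + 1) / ((((i + 1 : ℕ) : ℝ) + (k : ℝ)) ^ s * ((i + 1 : ℕ) : ℝ) ^ 1))]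
    congr 1
    ext j
    push_cast
    rw [show i + 1 + (j + 1) = i + j + 2 by ring,
      show (i : ℝ) + 1 + (j + 1) = i + j + 2 by ring]
    simp
  have H2 : HasSum (fun l : ℕ => x ^ (l + 2) * hh (l + 1) / ((l : ℝ) + 2) ^ s) (es2 s 1 x 1) := by
    have h := hS.hasSum
    rw [← e2, ← (Finset.HasAntidiagonal.sigmaAntidiagonalEquivProd (A := ℕ)).hasSum_iff] at h
    have h' := h.sigma (fun l => hasSum_fintype _)
    convert h' using 1
    ext l
    rw [Finset.univ_eq_attach]
    simp only [Function.comp, Finset.HasAntidiagonal.sigmaAntidiagonalEquivProd_apply]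
    rw [Finset.sum_attach (Finset.HasAntidiagonal.antidiagonal l) (fun p : ℕ × ℕ => x ^ (p.1 + p.2 + 2) /
      (((p.1 : ℝ) + p.2 + 2) ^ s * ((p.1 : ℝ) + 1))),
      Finset.Nat.sum_antidiagonal_eq_sum_range_succ_mk, hh, Finset.mul_sum, Finset.sum_div]
    apply Finset.sum_congr rfl
    intro i hi
    have : i ≤ l := by simp at hi; omega
    simp only
    rw [show i + (l - i) = l by omega, Nat.cast_sub this]
    rw [show (i : ℝ) + (l - i) + 2 = l + 2 by ring]
    field_simp
  have H1 : HasSum (fun l : ℕ => x ^ (l + 1) / ((l : ℝ) + 1) ^ (s + 1)) (es1 (s + 1) x) := by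
    have : es1 (s + 1) x = ∑' l : ℕ, x ^ (l + 1) / ((l : ℝ) + 1) ^ (s + 1) := by
      rw [es1, tsum_pnat_eq_tsum_succ (f := fun n : ℕ => x ^ n / (n : ℝ) ^ (s + 1))]
      push_cast
      rfl
    rw [this]
    apply Summable.hasSum
    have h1 : Summable (fun n : ℕ => 1 / ((n : ℝ) + 1) ^ (s + 1)) := by
      have := (summable_nat_add_iff 1).2
        (Real.summable_one_div_nat_pow.2 (by omega : 1 < s + 1))
      simpa using this
    refine Summable.of_norm_bounded h1 ?_
    intro i
    simp only [norm_div, norm_pow, Real.norm_eq_abs, hx, one_pow]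
    rw [abs_of_nonneg (by positivity)]
  have H2' : HasSum (fun l : ℕ => x ^ (l + 1) * hh l / ((l : ℝ) + 1) ^ s) (es2 s 1 x 1) := by
    rw [← hasSum_nat_add_iff' 1]
    simp only [Finset.sum_range_one]
    convert H2 using 1
    · rfl
    · ext l
      push_cast
      rw [show (l : ℝ) + 1 + 1 = l + 2 by ring]
    · simp [hh]
  rw [← hasSum_nat_add_iff' 1]
  simp only [Finset.sum_range_one]
  convert H1.add H2' using 1
  · rfl
  · ext l
    rw [hh_succ]
    push_cast
    field_simp
    ring
  · simp [hh]

lemma hasSum_even (s : ℕ) (hs : 2 ≤ s) :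
    HasSum (fun n : ℕ => hh (2 * n) / (n : ℝ) ^ s)
      (2 ^ (s - 1) * ((es1 (s + 1) 1 + es2 s 1 1 1) + (es1 (s + 1) (-1) + es2 s 1 (-1) 1))) := by
  have h := ((hasSum_h s hs 1 (by simp)).add (hasSum_h s hs (-1) (by simp))).mul_left (2 ^ (s - 1))
  have inj : Function.Injective (fun n : ℕ => 2 * n) := fun a b h => by simpa using h
  rw [← inj.hasSum_iff] at h
  · convert h using 1
    · rfl
    ext n
    obtain ⟨t, rfl⟩ : ∃ t, s = t + 1 := ⟨s - 1, by omega⟩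
    simp only [Function.comp, pow_mul]
    push_cast
    rw [mul_pow]
    by_cases hn : n = 0
    · subst hn; simp
    have : (n : ℝ) ≠ 0 := by exact_mod_cast hn
    field_simp
    simp
    ring
  · intro n hn
    have : Odd n := by
      rw [← Nat.not_even_iff_odd]
      rintro ⟨k, hk⟩
      exact hn ⟨k, by simp; omega⟩
    rw [this.neg_one_pow]
    ring

theorem stmt11 (s : ℕ) (hs : 2 ≤ s) :
    Filter.Tendsto
      (fun N : ℕ => ∑ m ∈ Finset.Icc 1 N, ∑ n ∈ Finset.Icc 1 N,
        (1 / ((n : ℝ) ^ s * ((m : ℝ) + 2 * n)) - 1 / ((n : ℝ) ^ s * ((m : ℝ) + n))))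
      Filter.atTop
      (nhds ((1 - 2 ^ (s - 1)) * (rzeta (s + 1) + es2 s 1 1 1)
        - 2 ^ (s - 1) * (es2 s 1 (-1) 1 + es1 (s + 1) (-1)))) := by
  have hz : rzeta (s + 1) = es1 (s + 1) 1 := by simp [rzeta, es1]
  have h := (hasSum_h s hs 1 (by simp)).sub (hasSum_even s hs)
  have ht := (h.tendsto_sum_nat).comp (Filter.tendsto_add_atTop_nat 1)
  have hE : Filter.Tendsto (fun N : ℕ => ∑ n ∈ Finset.Icc 1 N,
      (hh (N + n + n) - hh (N + n)) / (n : ℝ) ^ s) Filter.atTop (nhds 0) := by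
    have hc := (tendsto_one_div_add_atTop_nhds_zero_nat (𝕜 := ℝ)).cesaro
    refine squeeze_zero ?_ ?_ hc
    · intro N
      exact Finset.sum_nonneg fun n _ => div_nonneg (hh_diff_nonneg _ _) (by positivity)
    · intro N
      rw [Finset.mul_sum, Finset.range_eq_Ico,
        Finset.sum_Ico_add' (fun n : ℕ => ((N : ℝ)⁻¹ * (1 / (n : ℝ)))) 0 N 1 |>.symm.trans
          (Finset.sum_congr rfl fun i _ => by push_cast; rfl) |>.symm]
      have : Finset.Ico (0 + 1) (N + 1) = Finset.Icc 1 N := by ext; simp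
      rw [this]
      apply Finset.sum_le_sum
      intro n hn
      rw [Finset.mem_Icc] at hn
      have hn0 : (1 : ℝ) ≤ n := by exact_mod_cast hn.1
      have hN0 : (1 : ℝ) ≤ N := by exact_mod_cast hn.1.trans hn.2
      have hb := hh_diff_le (N + n) n (by omega)
      calc (hh (N + n + n) - hh (N + n)) / (n : ℝ) ^ s
          ≤ ((n : ℝ) / ((N + n : ℕ) : ℝ)) / (n : ℝ) ^ s := by gcongr
        _ ≤ ((n : ℝ) / (N : ℝ)) / (n : ℝ) ^ 2 := by
          gcongr
          · omega
        _ = (N : ℝ)⁻¹ * (1 / (n : ℝ)) := by field_simp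
  have hfin := ht.add hE
  rw [add_zero] at hfin
  convert hfin using 1
  · ext N
    rw [Finset.sum_comm]
    simp only [Function.comp]
    have e0 : ∀ f : ℕ → ℝ, f 0 = 0 → ∑ n ∈ Finset.range (N + 1), f n = ∑ n ∈ Finset.Icc 1 N, f n := by
      intro f hf
      rw [Finset.range_eq_Ico, Finset.sum_eq_sum_Ico_succ_bot (by omega), hf, zero_add]
      rfl
    rw [e0 _ (by simp [hh]), ← Finset.sum_add_distrib]
    apply Finset.sum_congr rfl
    intro n hn
    have a1 := hh_add n N
    have a2 := hh_add (2 * n) N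
    push_cast at a2
    rw [Finset.sum_sub_distrib]
    simp only [one_div, mul_inv, ← Finset.mul_sum] at a1 a2 ⊢
    rw [a1, a2, show N + 2 * n = N + n + n by ring]
    ring
  · rw [hz]
    congr 1
    ring
end

section
/- ζ_so(1,1,1,0) = 2·ζ(3) and ζ_so(1,0,1,1) = (5/8)·ζ(3) and ζ_so(0,1,1,1) = (3/4)·ζ(3). -/
lemma aux_summ : Summable (fun p : ℕ+ × ℕ+ => 1 / ((p.1 : ℝ) * (p.2 : ℝ) * ((p.1 : ℝ) + (p.2 : ℝ)))) := by
  have h1 : Summable (fun a : ℕ+ => 1 / ((a : ℕ) : ℝ) ^ (3 / 2 : ℝ)) :=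
    ((Real.summable_one_div_nat_rpow (p := 3 / 2)).2 (by norm_num)).comp_injective PNat.coe_injective
  have h2 := h1.mul_of_nonneg h1 (fun a => by positivity) (fun a => by positivity)
  refine Summable.of_nonneg_of_le (fun p => by positivity) (fun p => ?_) h2
  have ha : (0 : ℝ) < (p.1 : ℕ) := by exact_mod_cast p.1.pos
  have hb : (0 : ℝ) < (p.2 : ℕ) := by exact_mod_cast p.2.pos
  generalize ((p.1 : ℕ) : ℝ) = a at *
  generalize ((p.2 : ℕ) : ℝ) = b at *
  have e : ∀ x : ℝ, 0 < x → x ^ (3 / 2 : ℝ) = x * √x := by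
    intro x hx
    rw [show (3 / 2 : ℝ) = 1 + 1 / 2 by norm_num, Real.rpow_add hx, Real.rpow_one, Real.sqrt_eq_rpow]
  rw [e a ha, e b hb, div_mul_div_comm, one_mul]
  have hsa := Real.sqrt_pos.2 ha
  have hsb := Real.sqrt_pos.2 hb
  apply one_div_le_one_div_of_le (by positivity)
  have : √a * √b ≤ a + b := by
    nlinarith [sq_nonneg (√a - √b), Real.sq_sqrt ha.le, Real.sq_sqrt hb.le]
  calc a * √a * (b * √b) = a * b * (√a * √b) := by ring
    _ ≤ _ := by gcongr

lemma aux_tri (F : ℕ+ × ℕ+ → ℝ) (hF : Summable F) :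
    ∑' p, F p = (∑' n : ℕ+, F (n, n)) +
      ((∑' p : ℕ+ × ℕ+, F (p.1 + p.2, p.2)) + ∑' p : ℕ+ × ℕ+, F (p.2, p.1 + p.2)) := by
  let φ : ℕ+ ⊕ ((ℕ+ × ℕ+) ⊕ (ℕ+ × ℕ+)) → ℕ+ × ℕ+ :=
    Sum.elim (fun n => (n, n)) (Sum.elim (fun p => (p.1 + p.2, p.2)) (fun p => (p.2, p.1 + p.2)))
  have hφ : Function.Bijective φ := by
    constructor
    · rintro (n | ⟨a, b⟩ | ⟨a, b⟩) (m | ⟨c, d⟩ | ⟨c, d⟩) h <;>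
        simp only [φ, Sum.elim_inl, Sum.elim_inr, Prod.mk.injEq, ← PNat.coe_inj, PNat.add_coe] at h <;>
        simp only [Sum.inl.injEq, Sum.inr.injEq, Prod.mk.injEq, ← PNat.coe_inj, reduceCtorEq] <;>
        first
        | omega
        | (have := a.pos; omega)
        | (have := c.pos; omega)
    · rintro ⟨a, b⟩
      rcases lt_trichotomy a b with h | h | h
      · exact ⟨Sum.inr (Sum.inr (b - a, a)), by simp [φ, PNat.sub_add_of_lt h]⟩
      · exact ⟨Sum.inl a, by simp [φ, h]⟩
      · exact ⟨Sum.inr (Sum.inl (a - b, b)), by simp [φ, PNat.sub_add_of_lt h]⟩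
  have hs : Summable (fun x => F (φ x)) := hF.comp_injective hφ.1
  rw [← (Equiv.ofBijective φ hφ).tsum_eq F]
  have hr : Summable (fun x => F (φ (Sum.inr x))) := hs.comp_injective Sum.inr_injective
  have h1 : Summable (fun x => F (φ (Sum.inl x))) := hs.comp_injective Sum.inl_injective
  have h2 : Summable (fun x => F (φ (Sum.inr (Sum.inl x)))) := hr.comp_injective Sum.inl_injective
  have h3 : Summable (fun x => F (φ (Sum.inr (Sum.inr x)))) := hr.comp_injective Sum.inr_injective
  have := HasSum.sum (f := fun x => F (φ (Sum.inr x))) h2.hasSum h3.hasSum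
  have := HasSum.sum (f := fun x => F (φ x)) h1.hasSum this
  exact this.tsum_eq

lemma aux_tele (k : ℕ) : HasSum (fun b : ℕ => 1 / ((b : ℝ) + 1) - 1 / ((b : ℝ) + 1 + k))
    (∑ i ∈ Finset.range k, 1 / ((i : ℝ) + 1)) := by
  induction k with
  | zero => simp [hasSum_zero]
  | succ k ih =>
    rw [Finset.sum_range_succ]
    have h : HasSum (fun b : ℕ => 1 / ((b : ℝ) + 1 + k) - 1 / ((b : ℝ) + 1 + (k + 1)))
        (1 / ((k : ℝ) + 1)) := by
      rw [hasSum_iff_tendsto_nat_of_nonneg]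
      · have e : ∀ n : ℕ, ∑ b ∈ Finset.range n, (1 / ((b : ℝ) + 1 + k) - 1 / ((b : ℝ) + 1 + (k + 1)))
            = 1 / ((k : ℝ) + 1) - 1 / (((n + k : ℕ) : ℝ) + 1) := by
          intro n
          have := Finset.sum_range_sub' (fun b : ℕ => 1 / ((b : ℝ) + 1 + k)) n
          simp only [Nat.cast_add, Nat.cast_one, Nat.cast_zero] at this
          convert this using 3 <;> push_cast <;> ring_nf
        simp_rw [e]
        have := (tendsto_one_div_add_atTop_nhds_zero_nat (𝕜 := ℝ)).comp (Filter.tendsto_add_atTop_nat k)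
        simpa using this.const_sub (1 / ((k : ℝ) + 1))
      · intro b
        rw [sub_nonneg]
        apply one_div_le_one_div_of_le (by positivity)
        linarith
    convert ih.add h using 2
    push_cast; ring

lemma aux_inner (a : ℕ+) : ∑' b : ℕ+, 1 / ((a : ℝ) * (b : ℝ) * ((a : ℝ) + (b : ℝ))) =
    ∑' b : ℕ+, (if b ≤ a then 1 / ((a : ℝ) ^ 2 * (b : ℝ)) else 0) := by
  have ha : (0 : ℝ) < (a : ℕ) := by exact_mod_cast a.pos
  have h := (aux_tele a).mul_left (1 / (a : ℝ) ^ 2)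
  rw [← Equiv.pnatEquivNat.symm.tsum_eq, ← Equiv.pnatEquivNat.symm.tsum_eq (f := fun b : ℕ+ => if b ≤ a then _ else _)]
  trans (1 / (a : ℝ) ^ 2 * ∑ i ∈ Finset.range (a : ℕ), 1 / ((i : ℝ) + 1))
  · rw [← h.tsum_eq]
    congr 1; ext b
    simp
    field_simp
    ring
  · rw [tsum_eq_sum (s := Finset.range (a : ℕ)), Finset.mul_sum]
    · refine Finset.sum_congr rfl fun i hi => ?_
      rw [Finset.mem_range] at hi
      have : Equiv.pnatEquivNat.symm i ≤ a := by
        rw [← PNat.coe_le_coe]; simpa using hi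
      rw [if_pos this]
      simp
      ring
    · intro i hi
      rw [Finset.mem_range] at hi
      have : ¬ Equiv.pnatEquivNat.symm i ≤ a := by
        rw [← PNat.coe_le_coe]; simpa using hi
      rw [if_neg this]

theorem stmt14 :
    zetaSO 1 1 1 0 = 2 * rzeta 3 ∧
    zetaSO 1 0 1 1 = (5 / 8) * rzeta 3 ∧
    zetaSO 0 1 1 1 = (3 / 4) * rzeta 3 := by
  have hpos : ∀ a : ℕ+, (0 : ℝ) < (a : ℕ) := fun a => by exact_mod_cast a.pos
  have hf := aux_summ
  -- summability
  have hA : Summable (fun p : ℕ+ × ℕ+ => 1 / ((p.1 : ℝ) * ((p.1 : ℝ) + p.2) * ((p.1 : ℝ) + 2 * p.2))) := by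
    refine Summable.of_nonneg_of_le (fun p => by positivity) (fun p => ?_) hf
    have := hpos p.1; have := hpos p.2
    apply one_div_le_one_div_of_le (by positivity)
    rw [mul_right_comm]
    gcongr
    linarith
  have hB : Summable (fun p : ℕ+ × ℕ+ => 1 / ((p.2 : ℝ) * ((p.1 : ℝ) + p.2) * ((p.1 : ℝ) + 2 * p.2))) := by
    refine Summable.of_nonneg_of_le (fun p => by positivity) (fun p => ?_) hf
    have := hpos p.1; have := hpos p.2
    apply one_div_le_one_div_of_le (by positivity)
    rw [mul_comm (p.1 : ℝ), mul_right_comm]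
    gcongr
    linarith
  have hG : Summable (fun p : ℕ+ × ℕ+ => 1 / (((p.1 : ℝ) + p.2) ^ 2 * (p.2 : ℝ))) := by
    refine Summable.of_nonneg_of_le (fun p => by positivity) (fun p => ?_) hf
    have := hpos p.1; have := hpos p.2
    apply one_div_le_one_div_of_le (by positivity)
    have h3 : 0 < ((p.1 : ℝ) + p.2) * p.2 * p.2 := by positivity
    nlinarith
  have hI : Summable (fun p : ℕ+ × ℕ+ => if p.2 ≤ p.1 then 1 / ((p.1 : ℝ) ^ 2 * (p.2 : ℝ)) else 0) := by
    refine Summable.of_nonneg_of_le (fun p => by split_ifs <;> positivity) (fun p => ?_) (hf.mul_left 2)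
    have h1 := hpos p.1; have h2 := hpos p.2
    split_ifs with h
    · have h' : ((p.2 : ℕ) : ℝ) ≤ (p.1 : ℕ) := by exact_mod_cast h
      rw [mul_one_div, div_le_div_iff₀ (by positivity) (by positivity)]
      have : 0 < (p.1 : ℝ) * p.2 := by positivity
      nlinarith
    · positivity
  have eT : zetaSO 1 1 1 0 = ∑' p : ℕ+ × ℕ+, 1 / ((p.1 : ℝ) * (p.2 : ℝ) * ((p.1 : ℝ) + (p.2 : ℝ))) := by
    rw [hf.tsum_prod]; simp [zetaSO]
  have eA : zetaSO 1 0 1 1 = ∑' p : ℕ+ × ℕ+, 1 / ((p.1 : ℝ) * ((p.1 : ℝ) + p.2) * ((p.1 : ℝ) + 2 * p.2)) := by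
    rw [hA.tsum_prod]; simp [zetaSO]
  have eB : zetaSO 0 1 1 1 = ∑' p : ℕ+ × ℕ+, 1 / ((p.2 : ℝ) * ((p.1 : ℝ) + p.2) * ((p.1 : ℝ) + 2 * p.2)) := by
    rw [hB.tsum_prod]; simp [zetaSO]
  -- T = B + 2 A
  have r1 : zetaSO 1 1 1 0 = zetaSO 0 1 1 1 + 2 * zetaSO 1 0 1 1 := by
    rw [eT, eA, eB, ← tsum_mul_left, ← hB.tsum_add (hA.mul_left 2)]
    congr 1; ext p
    have := hpos p.1; have := hpos p.2
    field_simp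
  -- T = ζ(3)/2 + 2 B
  have r2 : zetaSO 1 1 1 0 = (1 / 2) * rzeta 3 + (zetaSO 0 1 1 1 + zetaSO 0 1 1 1) := by
    rw [eT, eB, aux_tri _ hf, rzeta, ← tsum_mul_left]
    congr 1
    · congr 1; ext n
      have := hpos n
      field_simp; ring
    · congr 1 <;>
      · congr 1; ext p
        push_cast
        congr 1
        ring
  -- T = ζ(3) + G
  have r3 : zetaSO 1 1 1 0 = rzeta 3 + ∑' p : ℕ+ × ℕ+, 1 / (((p.1 : ℝ) + p.2) ^ 2 * (p.2 : ℝ)) := by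
    rw [eT, hf.tsum_prod]
    simp_rw [aux_inner]
    rw [← hI.tsum_prod (f := fun p : ℕ+ × ℕ+ => if p.2 ≤ p.1 then 1 / ((p.1 : ℝ) ^ 2 * (p.2 : ℝ)) else 0), aux_tri _ hI, rzeta]
    congr 1
    · congr 1; ext n
      simp; ring
    · have z : ∀ p : ℕ+ × ℕ+, ¬ (p.1 + p.2 ≤ p.2) := fun p => by
        rw [← PNat.coe_le_coe, PNat.add_coe]; have := p.1.pos; omega
      have z' : ∀ p : ℕ+ × ℕ+, p.2 ≤ p.1 + p.2 := fun p => by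
        rw [← PNat.coe_le_coe, PNat.add_coe]; omega
      simp [z, z']
  -- T = 2 G
  have r4 : zetaSO 1 1 1 0 = 2 * ∑' p : ℕ+ × ℕ+, 1 / (((p.1 : ℝ) + p.2) ^ 2 * (p.2 : ℝ)) := by
    have hG' := (Equiv.prodComm ℕ+ ℕ+).summable_iff.2 hG
    have e := (Equiv.prodComm ℕ+ ℕ+).tsum_eq (fun p : ℕ+ × ℕ+ => 1 / (((p.1 : ℝ) + p.2) ^ 2 * (p.2 : ℝ)))
    rw [two_mul]
    nth_rw 1 [← e]
    refine Eq.trans ?_ (Summable.tsum_add hG' hG)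
    rw [eT]
    congr 1; ext p
    have := hpos p.1; have := hpos p.2
    simp only [Function.comp_apply, Equiv.prodComm_apply, Prod.fst_swap, Prod.snd_swap]
    rw [add_comm (p.2 : ℝ)]
    field_simp
    ring
  refine ⟨?_, ?_, ?_⟩ <;> linarith
end

section
/- ζ_so(1,1,0,1) = (11/8)·ζ(3) and ζ_so(0,0,2,1) = (1/4)·ζ(3). -/
theorem w_hc {f g : ℕ → ℝ} {a b : ℝ} (h : HasSum f a) (hf : ∀ n, g n = f n) (hb : b = a) :
    HasSum g b := by
  rw [hb, funext hf]; exact h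

open Finset Filter Topology in
theorem w_tele (u : ℕ → ℝ) (ha : Antitone u) (h0 : Tendsto u atTop (𝓝 0)) (n : ℕ) :
    HasSum (fun m => u m - u (m + n)) (∑ j ∈ range n, u j) := by
  rw [hasSum_iff_tendsto_nat_of_nonneg (fun m => sub_nonneg.2 (ha (Nat.le_add_right m n)))]
  have e : ∀ M, ∑ m ∈ range M, (u m - u (m + n)) =
      ∑ j ∈ range n, u j - ∑ j ∈ range n, u (M + j) := by
    intro M
    have h1 := sum_range_add u M n
    have h2 := sum_range_add u n M
    rw [add_comm n M] at h2
    rw [sum_sub_distrib]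
    have h3 : ∑ m ∈ range M, u (m + n) = ∑ m ∈ range M, u (n + m) :=
      sum_congr rfl (fun m _ => by rw [add_comm])
    linarith
  simp only [e]
  have h : Tendsto (fun M => ∑ j ∈ range n, u (M + j)) atTop (𝓝 (∑ j ∈ range n, (0:ℝ))) := by
    apply tendsto_finsetSum
    intro j _
    exact h0.comp (tendsto_add_atTop_nat j)
  simpa using (tendsto_const_nhds (x := ∑ j ∈ range n, u j)).sub h

theorem w_snd (g : ℕ → ℝ) (N : ℕ) :
    ∑ p ∈ Finset.HasAntidiagonal.antidiagonal N, g p.2 = ∑ i ∈ Finset.range (N + 1), g i := by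
  rw [← Finset.Nat.sum_antidiagonal_swap]
  exact Finset.Nat.sum_antidiagonal_eq_sum_range_succ (fun i _ => g i) N

open Finset in
theorem w_anti (f : ℕ × ℕ → ℝ) (hf : Summable f) :
    HasSum (fun N => ∑ p ∈ HasAntidiagonal.antidiagonal N, f p) (∑' p, f p) := by
  have h1 : HasSum (f ∘ (HasAntidiagonal.sigmaAntidiagonalEquivProd (A := ℕ))) (∑' p, f p) :=
    (Equiv.hasSum_iff (HasAntidiagonal.sigmaAntidiagonalEquivProd (A := ℕ)) (f := f)).2 hf.hasSum
  have := HasSum.sigma h1 (fun N => hasSum_fintype _)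
  refine w_hc this (fun N => ?_) rfl
  exact (Finset.sum_coe_sort (HasAntidiagonal.antidiagonal N) f).symm

theorem w_par (f : ℕ × ℕ → ℝ) (hf : Summable f) :
    ∑' p, f p = ∑' p : ℕ × ℕ, f (2 * p.1, p.2) + ∑' p : ℕ × ℕ, f (2 * p.1 + 1, p.2) := by
  have i1 : Function.Injective (fun p : ℕ × ℕ => (2 * p.1, p.2)) := by
    rintro ⟨a, b⟩ ⟨c, d⟩ h; simp at h ⊢; omega
  have i2 : Function.Injective (fun p : ℕ × ℕ => (2 * p.1 + 1, p.2)) := by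
    rintro ⟨a, b⟩ ⟨c, d⟩ h; simp at h ⊢; omega
  have s1 := hf.comp_injective i1
  have s2 := hf.comp_injective i2
  have t1 := s1.tsum_prod
  have t2 := s2.tsum_prod
  simp only [Function.comp_apply] at t1 t2
  rw [hf.tsum_prod, t1, t2]
  exact (tsum_even_add_odd (f := fun m => ∑' n, f (m, n)) s1.prod s2.prod).symm

theorem w_par2 (f : ℕ × ℕ → ℝ) (hf : Summable f) :
    ∑' p, f p = ∑' p : ℕ × ℕ, f (p.1, 2 * p.2) + ∑' p : ℕ × ℕ, f (p.1, 2 * p.2 + 1) := by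
  have h := w_par (f ∘ Equiv.prodComm ℕ ℕ) ((Equiv.prodComm ℕ ℕ).summable_iff.2 hf)
  have h' := (Equiv.prodComm ℕ ℕ).tsum_eq f
  simp only [Function.comp_apply] at h
  rw [h'] at h
  rw [h, ← (Equiv.prodComm ℕ ℕ).tsum_eq (fun p : ℕ × ℕ => f (p.1, 2 * p.2)), ← (Equiv.prodComm ℕ ℕ).tsum_eq (fun p : ℕ × ℕ => f (p.1, 2 * p.2 + 1))]
  rfl

noncomputable def wA (p : ℕ × ℕ) : ℝ := 1 / (((p.1:ℝ) + 1) * (p.2 + 1) * (p.1 + p.2 + 2))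

theorem wA_sum : Summable wA := by
  have h : Summable (fun n : ℕ => 1 / ((n : ℝ) + 1) ^ (3 / 2 : ℝ)) := by
    have := (summable_nat_add_iff 1).2 (Real.summable_one_div_nat_rpow (p := 3/2) |>.2 (by norm_num))
    simpa using this
  refine Summable.of_nonneg_of_le (fun p => ?_) (fun p => ?_)
    (h.mul_of_nonneg h (fun n => by positivity) (fun n => by positivity))
  · unfold wA; positivity
  · unfold wA
    rw [← one_div_mul_one_div_rev, one_div_mul_one_div_rev, one_div_mul_one_div_rev]
    have k : ∀ x : ℝ, 0 < x → x ^ (3 / 2 : ℝ) = x * √x := by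
      intro x hx
      rw [Real.sqrt_eq_rpow, ← Real.rpow_one_add' hx.le (by norm_num)]; norm_num
    have a1 : (0:ℝ) < p.1 + 1 := by positivity
    have a2 : (0:ℝ) < p.2 + 1 := by positivity
    rw [k _ a1, k _ a2]
    have q1 := Real.sq_sqrt a1.le
    have q2 := Real.sq_sqrt a2.le
    have r1 := Real.sqrt_pos.2 a1
    have r2 := Real.sqrt_pos.2 a2
    set s := √((p.1:ℝ) + 1)
    set t := √((p.2:ℝ) + 1)
    apply one_div_le_one_div_of_le (by positivity)
    have : s * t ≤ p.1 + p.2 + 2 := by nlinarith [sq_nonneg (s - t)]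
    have := mul_le_mul_of_nonneg_left this (mul_pos a1 a2).le
    nlinarith

theorem w_lim (a b : ℝ) (ha : 0 < a) :
    Filter.Tendsto (fun m : ℕ => 1 / (a * m + b)) Filter.atTop (nhds 0) := by
  have : Filter.Tendsto (fun m : ℕ => a * (m:ℝ) + b) Filter.atTop Filter.atTop :=
    Filter.tendsto_atTop_add_const_right _ _ (tendsto_natCast_atTop_atTop.const_mul_atTop ha)
  simp only [one_div]
  exact this.inv_tendsto_atTop

theorem w_ant (a b : ℝ) (ha : 0 < a) (hb : 0 < b) :
    Antitone (fun m : ℕ => 1 / (a * m + b)) := by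
  intro m n h
  have : (m:ℝ) ≤ n := by exact_mod_cast h
  apply one_div_le_one_div_of_le (by positivity)
  nlinarith

noncomputable def wH (n : ℕ) : ℝ := ∑ j ∈ Finset.range n, 1 / ((j:ℝ) + 1)
noncomputable def wO (n : ℕ) : ℝ := ∑ j ∈ Finset.range n, 1 / (2 * (j:ℝ) + 1)

theorem w_inH (k : ℕ) (hk : 0 < k) :
    HasSum (fun m : ℕ => 1 / (((m:ℝ) + 1) * (m + k + 1))) (wH k / k) := by
  have h := (w_tele _ (w_ant 1 1 one_pos one_pos) (w_lim 1 1 one_pos) k).div_const (k:ℝ)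
  have hk' : (0:ℝ) < k := by exact_mod_cast hk
  simp only [one_mul] at h
  refine w_hc h (fun m => ?_) (by simp [wH])
  push_cast
  field_simp
  ring

theorem w_inO (k : ℕ) (hk : 0 < k) :
    HasSum (fun m : ℕ => 1 / ((2 * (m:ℝ) + 1) * (2 * m + 2 * k + 1))) (wO k / (2 * k)) := by
  have h := (w_tele _ (w_ant 2 1 two_pos one_pos) (w_lim 2 1 two_pos) k).div_const (2 * (k:ℝ))
  have hk' : (0:ℝ) < k := by exact_mod_cast hk
  refine w_hc h (fun m => ?_) (by simp [wO])
  push_cast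
  field_simp
  ring

theorem w_comm (f : ℕ × ℕ → ℝ) (hf : Summable f) (g : ℕ → ℝ)
    (h : ∀ n, HasSum (fun m => f (m, n)) (g n)) : HasSum g (∑' p, f p) := by
  have h1 : HasSum (f ∘ Equiv.prodComm ℕ ℕ) (∑' p, f p) :=
    (Equiv.hasSum_iff (Equiv.prodComm ℕ ℕ)).2 hf.hasSum
  exact h1.prod_fiberwise h

/-- A by rows -/
theorem w_A1 : HasSum (fun n : ℕ => wH (n + 1) / ((n:ℝ) + 1) ^ 2) (∑' p, wA p) := by
  apply w_comm _ wA_sum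
  intro n
  have h := (w_inH (n + 1) n.succ_pos).div_const ((n:ℝ) + 1)
  refine w_hc h (fun m => ?_) ?_
  · unfold wA; push_cast; field_simp; ring
  · push_cast; field_simp

/-- A by diagonals -/
theorem w_A2 : HasSum (fun n : ℕ => 2 * (wH (n + 1) / ((n:ℝ) + 2) ^ 2)) (∑' p, wA p) := by
  refine w_hc (w_anti _ wA_sum) (fun N => ?_) rfl
  have e : ∀ p ∈ Finset.HasAntidiagonal.antidiagonal N, wA p =
      (1 / ((p.1:ℝ) + 1) + 1 / ((p.2:ℝ) + 1)) / ((N:ℝ) + 2) ^ 2 := by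
    intro p hp
    have : (N:ℝ) = p.1 + p.2 := by exact_mod_cast (Finset.HasAntidiagonal.mem_antidiagonal.1 hp).symm
    rw [this]; unfold wA; field_simp; ring
  rw [Finset.sum_congr rfl e, ← Finset.sum_div, Finset.sum_add_distrib,
    Finset.Nat.sum_antidiagonal_eq_sum_range_succ (fun i _ => 1 / ((i:ℝ) + 1)),
    w_snd (fun i => 1 / ((i:ℝ) + 1))]
  unfold wH
  ring

theorem w_z3 : HasSum (fun n : ℕ => 1 / ((n:ℝ) + 1) ^ 3) (rzeta 3) := by
  unfold rzeta
  rw [tsum_pnat_eq_tsum_succ (f := fun n : ℕ => 1 / (n:ℝ) ^ 3)]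
  have := ((summable_nat_add_iff 1).2 (Real.summable_one_div_nat_pow (p := 3) |>.2 (by norm_num))).hasSum
  simpa using this

theorem w_A : ∑' p, wA p = 2 * rzeta 3 := by
  have h := (w_A1.sub w_z3).mul_left 2
  have h2 : HasSum (fun n : ℕ => 2 * (wH n / ((n:ℝ) + 1) ^ 2)) (∑' p, wA p) := by
    rw [← hasSum_nat_add_iff' 1]
    refine w_hc w_A2 (fun n => ?_) ?_
    · push_cast; ring
    · simp [wH]
  have h3 := h.unique (by
    refine w_hc h2 (fun n => ?_) rfl
    rw [wH, Finset.sum_range_succ, ← wH]; field_simp; ring)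
  linarith

noncomputable def wX (p : ℕ × ℕ) : ℝ := 1 / ((2 * (p.1:ℝ) + 1) * (2 * p.2 + 2) * (2 * p.1 + 2 * p.2 + 3))
noncomputable def wOO (p : ℕ × ℕ) : ℝ := 1 / ((2 * (p.1:ℝ) + 1) * (2 * p.2 + 1) * (2 * p.1 + 2 * p.2 + 2))

theorem wX_eq (p : ℕ × ℕ) : wX p = wA (2 * p.1, 2 * p.2 + 1) := by
  unfold wX wA; push_cast; congr 1; ring

theorem wOO_eq (p : ℕ × ℕ) : wOO p = wA (2 * p.1, 2 * p.2) := by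
  unfold wOO wA; push_cast; congr 1

theorem wX_sum : Summable wX := by
  rw [show wX = wA ∘ (fun p : ℕ × ℕ => (2 * p.1, 2 * p.2 + 1)) from funext wX_eq]
  apply wA_sum.comp_injective
  rintro ⟨a, b⟩ ⟨c, d⟩ h; simp at h ⊢; omega

theorem wOO_sum : Summable wOO := by
  rw [show wOO = wA ∘ (fun p : ℕ × ℕ => (2 * p.1, 2 * p.2)) from funext wOO_eq]
  apply wA_sum.comp_injective
  rintro ⟨a, b⟩ ⟨c, d⟩ h; simp at h ⊢; omega

theorem w_X1 : HasSum (fun n : ℕ => wO (n + 1) / (2 * (n:ℝ) + 2) ^ 2) (∑' p, wX p) := by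
  apply w_comm _ wX_sum
  intro n
  have h := (w_inO (n + 1) n.succ_pos).div_const (2 * (n:ℝ) + 2)
  refine w_hc h (fun m => ?_) ?_
  · unfold wX; push_cast; field_simp; ring
  · push_cast; field_simp

theorem w_O2 : HasSum (fun n : ℕ => 2 * (wO (n + 1) / (2 * (n:ℝ) + 2) ^ 2)) (∑' p, wOO p) := by
  refine w_hc (w_anti _ wOO_sum) (fun N => ?_) rfl
  have e : ∀ p ∈ Finset.HasAntidiagonal.antidiagonal N, wOO p =
      (1 / (2 * (p.1:ℝ) + 1) + 1 / (2 * (p.2:ℝ) + 1)) / (2 * (N:ℝ) + 2) ^ 2 := by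
    intro p hp
    have : (N:ℝ) = p.1 + p.2 := by exact_mod_cast (Finset.HasAntidiagonal.mem_antidiagonal.1 hp).symm
    rw [this]; unfold wOO; field_simp; ring
  rw [Finset.sum_congr rfl e, ← Finset.sum_div, Finset.sum_add_distrib,
    Finset.Nat.sum_antidiagonal_eq_sum_range_succ (fun i _ => 1 / (2 * (i:ℝ) + 1)),
    w_snd (fun i => 1 / (2 * (i:ℝ) + 1))]
  unfold wO
  ring

theorem w_X : ∑' p, wX p = 7 / 16 * rzeta 3 := by
  have h1 := (w_X1.mul_left 2).unique w_O2
  have h2 := w_par wA wA_sum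
  rw [w_par2 (fun p => wA (2 * p.1, p.2)), w_par2 (fun p => wA (2 * p.1 + 1, p.2))] at h2
  · simp only [← wX_eq, ← wOO_eq] at h2
    have h3 : ∑' p : ℕ × ℕ, wA (2 * p.1 + 1, 2 * p.2) = ∑' p, wX p := by
      rw [← (Equiv.prodComm ℕ ℕ).tsum_eq]
      congr 1; ext p; simp [wX, wA]; ring
    have h4 : ∑' p : ℕ × ℕ, wA (2 * p.1 + 1, 2 * p.2 + 1) = 1 / 8 * ∑' p, wA p := by
      rw [← tsum_mul_left]
      congr 1; ext p; unfold wA; push_cast; field_simp; ring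
    rw [h3, h4] at h2
    have := w_A
    linarith
  · apply wA_sum.comp_injective (i := fun p : ℕ × ℕ => (2 * p.1 + 1, p.2))
    rintro ⟨a, b⟩ ⟨c, d⟩ h; simp at h ⊢; omega
  · apply wA_sum.comp_injective (i := fun p : ℕ × ℕ => (2 * p.1, p.2))
    rintro ⟨a, b⟩ ⟨c, d⟩ h; simp at h ⊢; omega

noncomputable def wS (p : ℕ × ℕ) : ℝ := 1 / (((p.1:ℝ) + 1) * (p.2 + 1) * (p.1 + 2 * p.2 + 3))
noncomputable def wR (p : ℕ × ℕ) : ℝ := 1 / (((p.1:ℝ) + p.2 + 2) ^ 2 * (p.1 + 2 * p.2 + 3))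

theorem wS_sum : Summable wS := by
  refine Summable.of_nonneg_of_le (fun p => ?_) (fun p => ?_) wA_sum
  · unfold wS; positivity
  · unfold wS wA
    apply one_div_le_one_div_of_le (by positivity)
    gcongr <;> linarith

theorem wR_sum : Summable wR := by
  refine Summable.of_nonneg_of_le (fun p => ?_) (fun p => ?_) wA_sum
  · unfold wR; positivity
  · unfold wR wA
    apply one_div_le_one_div_of_le (by positivity)
    have a1 : (0:ℝ) ≤ p.1 := by positivity
    have a2 : (0:ℝ) ≤ p.2 := by positivity
    apply mul_le_mul <;> nlinarith [mul_nonneg a1 a2]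

theorem w_S : ∑' p, wS p = 11 / 8 * rzeta 3 := by
  rw [w_par wS wS_sum]
  have h1 : ∑' p : ℕ × ℕ, wS (2 * p.1, p.2) = 2 * ∑' p, wX p := by
    rw [← tsum_mul_left]
    congr 1; ext p; unfold wS wX; push_cast; field_simp
  have h2 : ∑' p : ℕ × ℕ, wS (2 * p.1 + 1, p.2) = 1 / 4 * ∑' p, wA p := by
    rw [← tsum_mul_left]
    congr 1; ext p; unfold wS wA; push_cast; field_simp; ring
  rw [h1, h2, w_X, w_A]; ring

theorem w_S1 : HasSum (fun n : ℕ => wH (2 * n + 2) / (2 * ((n:ℝ) + 1) ^ 2)) (∑' p, wS p) := by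
  apply w_comm _ wS_sum
  intro n
  have h := (w_inH (2 * n + 2) (by omega)).div_const ((n:ℝ) + 1)
  refine w_hc h (fun m => ?_) ?_
  · unfold wS; push_cast; field_simp; ring
  · push_cast; field_simp

theorem w_R1 : HasSum (fun n : ℕ => (wH (2 * n + 3) - wH (n + 2)) / ((n:ℝ) + 2) ^ 2) (∑' p, wR p) := by
  refine w_hc (w_anti _ wR_sum) (fun N => ?_) rfl
  have e : ∀ p ∈ Finset.HasAntidiagonal.antidiagonal N, wR p =
      (1 / ((N:ℝ) + p.2 + 3)) / ((N:ℝ) + 2) ^ 2 := by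
    intro p hp
    have : (N:ℝ) = p.1 + p.2 := by exact_mod_cast (Finset.HasAntidiagonal.mem_antidiagonal.1 hp).symm
    rw [this]; unfold wR; field_simp; ring
  rw [Finset.sum_congr rfl e, ← Finset.sum_div,
    w_snd (fun i => 1 / ((N:ℝ) + i + 3))]
  congr 1
  unfold wH
  rw [show 2 * N + 3 = (N + 2) + (N + 1) by ring, Finset.sum_range_add, add_sub_cancel_left]
  apply Finset.sum_congr rfl
  intro j _; push_cast; congr 1; ring

theorem w_R : ∑' p, wR p = 1 / 4 * rzeta 3 := by
  have h2 : HasSum (fun n : ℕ => (wH (2 * n + 1) - wH (n + 1)) / ((n:ℝ) + 1) ^ 2) (∑' p, wR p) := by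
    rw [← hasSum_nat_add_iff' 1]
    refine w_hc w_R1 (fun n => ?_) ?_
    · rw [show 2 * (n + 1) + 1 = 2 * n + 3 by ring]; push_cast; ring
    · simp
  have h3 := ((w_S1.mul_left 2).sub w_A1).sub (w_z3.mul_left (1 / 2))
  have h4 := h3.unique (by
    refine w_hc h2 (fun n => ?_) rfl
    rw [show wH (2 * n + 2) = wH (2 * n + 1) + 1 / (((2 * n + 1 : ℕ):ℝ) + 1) from
      Finset.sum_range_succ _ _]
    push_cast; field_simp; ring)
  rw [w_S, w_A] at h4
  linarith

theorem w_conv (F : ℕ → ℕ → ℝ) (h : Summable (fun p : ℕ × ℕ => F (p.1 + 1) (p.2 + 1))) :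
    ∑' (m : ℕ+) (n : ℕ+), F m n = ∑' p : ℕ × ℕ, F (p.1 + 1) (p.2 + 1) := by
  rw [h.tsum_prod, tsum_pnat_eq_tsum_succ (f := fun m : ℕ => ∑' n : ℕ+, F m n)]
  congr 1; ext m
  rw [tsum_pnat_eq_tsum_succ (f := fun n : ℕ => F (m + 1) n)]

theorem stmt15 :
    zetaSO 1 1 0 1 = (11 / 8) * rzeta 3 ∧
    zetaSO 0 0 2 1 = (1 / 4) * rzeta 3 := by
  constructor
  · have e : (fun p : ℕ × ℕ => 1 / (((p.1 + 1 : ℕ) : ℝ) ^ 1 * ((p.2 + 1 : ℕ) : ℝ) ^ 1 *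
        (((p.1 + 1 : ℕ) : ℝ) + ((p.2 + 1 : ℕ) : ℝ)) ^ 0 *
        (((p.1 + 1 : ℕ) : ℝ) + 2 * ((p.2 + 1 : ℕ) : ℝ)) ^ 1)) = wS := by
      ext p; unfold wS; push_cast; congr 1; ring
    rw [← w_S, ← e]
    exact w_conv (fun m n => 1 / ((m : ℝ) ^ 1 * (n : ℝ) ^ 1 * ((m : ℝ) + (n : ℝ)) ^ 0 *
      ((m : ℝ) + 2 * (n : ℝ)) ^ 1)) (by rw [e]; exact wS_sum)
  · have e : (fun p : ℕ × ℕ => 1 / (((p.1 + 1 : ℕ) : ℝ) ^ 0 * ((p.2 + 1 : ℕ) : ℝ) ^ 0 *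
        (((p.1 + 1 : ℕ) : ℝ) + ((p.2 + 1 : ℕ) : ℝ)) ^ 2 *
        (((p.1 + 1 : ℕ) : ℝ) + 2 * ((p.2 + 1 : ℕ) : ℝ)) ^ 1)) = wR := by
      ext p; unfold wR; push_cast; congr 1; ring
    rw [← w_R, ← e]
    exact w_conv (fun m n => 1 / ((m : ℝ) ^ 0 * (n : ℝ) ^ 0 * ((m : ℝ) + (n : ℝ)) ^ 2 *
      ((m : ℝ) + 2 * (n : ℝ)) ^ 1)) (by rw [e]; exact wR_sum)
end

section
/- ζ_so(0,0,2,2) = (3/8)·ζ(4) − 4·ζ(3,1; −1,1), where ζ(3,1;−1,1) = ∑_{m>n≥1} (−1)^m/(m^3 n). -/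
namespace S16

noncomputable def f (p : ℕ+ × ℕ+) : ℝ := 1 / (p.1 : ℝ) ^ 2 * (1 / (p.2 : ℝ) ^ 2)

lemma sum2 : Summable (fun m : ℕ+ => 1 / (m : ℝ) ^ 2) :=
  (Real.summable_one_div_nat_pow.mpr (by norm_num : 1 < 2)).comp_injective PNat.coe_injective

lemma sumf : Summable f :=
  sum2.mul_of_nonneg sum2 (fun _ => by positivity) (fun _ => by positivity)

lemma f_nonneg (p) : 0 ≤ f p := by unfold f; positivity

lemma sumb {g : ℕ+ × ℕ+ → ℝ} {C : ℝ} (h : ∀ p, |g p| ≤ C * f p) : Summable g :=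
  Summable.of_norm_bounded (sumf.mul_left C) h

lemma z2 : rzeta 2 = Real.pi ^ 2 / 6 := by
  unfold rzeta
  rw [← hasSum_zeta_two.tsum_eq]
  refine PNat.coe_injective.tsum_eq (f := fun n : ℕ => 1 / (n : ℝ) ^ 2) fun n hn => ?_
  have : n ≠ 0 := by rintro rfl; simp at hn
  exact ⟨⟨n, Nat.pos_of_ne_zero this⟩, rfl⟩

lemma z4 : rzeta 4 = Real.pi ^ 4 / 90 := by
  unfold rzeta
  rw [← hasSum_zeta_four.tsum_eq]
  refine PNat.coe_injective.tsum_eq (f := fun n : ℕ => 1 / (n : ℝ) ^ 4) fun n hn => ?_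
  have : n ≠ 0 := by rintro rfl; simp at hn
  exact ⟨⟨n, Nat.pos_of_ne_zero this⟩, rfl⟩

noncomputable def e (m : ℕ+) : ℝ := (-1) ^ (m : ℕ) * (1 / (m : ℝ) ^ 2)

lemma norm_e (m : ℕ+) : ‖e m‖ = 1 / (m : ℝ) ^ 2 := by
  unfold e
  rw [norm_mul, norm_pow, norm_neg, norm_one, one_pow, one_mul, Real.norm_of_nonneg (by positivity)]

lemma sume : Summable (fun m => ‖e m‖) := by
  simp_rw [norm_e]; exact sum2

lemma even_of {m : ℕ+} (h : (1 + (-1 : ℝ) ^ (m : ℕ)) ≠ 0) : ∃ k : ℕ+, 2 * k = m := by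
  rcases Nat.even_or_odd (m : ℕ) with h' | h'
  · obtain ⟨k, hk⟩ := h'
    have : 0 < k := by have := m.pos; omega
    exact ⟨⟨k, this⟩, PNat.coe_injective (by change 2 * k = (m : ℕ); omega)⟩
  · exact absurd (by rw [h'.neg_one_pow]; norm_num) h

lemma two_inj : Function.Injective (fun m : ℕ+ => 2 * m) := fun a b h => by simpa using h

lemma E_eq : ∑' m, e m = - rzeta 2 / 2 := by
  have h1 : ∑' m : ℕ+, (1 / (m : ℝ) ^ 2 + e m) = rzeta 2 + ∑' m, e m :=
    sum2.tsum_add sume.of_norm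
  have h2 : ∑' m : ℕ+, (1 / (m : ℝ) ^ 2 + e m) = rzeta 2 / 2 := by
    rw [← two_inj.tsum_eq, rzeta, ← tsum_div_const]
    · congr 1; ext m
      have : (m : ℝ) ≠ 0 := by positivity
      simp only [e, PNat.mul_coe, PNat.val_ofNat, Nat.cast_mul, Nat.cast_ofNat,
        (even_two_mul (m : ℕ)).neg_one_pow]
      field_simp; norm_num
    · intro m hm
      apply even_of
      intro h
      apply hm
      unfold e
      linear_combination (1 / (m : ℝ) ^ 2) * h
  linarith

/-- pair map -/
def φ (p : ℕ+ × ℕ+) : ℕ+ × ℕ+ := (p.1 + p.2, p.1)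
lemma φ_inj : Function.Injective φ := by
  rintro ⟨a, b⟩ ⟨c, d⟩ h
  simp only [φ, Prod.mk.injEq] at h
  obtain ⟨h1, rfl⟩ := h
  simpa using h1

lemma φ_sum (g : ℕ+ × ℕ+ → ℝ) :
    ∑' p, g (φ p) = ∑' p : ℕ+ × ℕ+, if p.2 < p.1 then g p else 0 := by
  rw [← φ_inj.tsum_eq (f := fun p : ℕ+ × ℕ+ => if p.2 < p.1 then g p else 0)]
  · congr 1; ext ⟨a, b⟩
    have : (φ (a, b)).2 < (φ (a, b)).1 := PNat.lt_add_right a b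
    rw [if_pos this]
  · rintro ⟨a, b⟩ h
    have : b < a := by by_contra h'; simp [h'] at h
    exact ⟨(b, a - b), by simp [φ, PNat.add_sub_of_lt this]⟩

def ψ (p : ℕ+ × ℕ+) : ℕ+ × ℕ+ := (p.1 + p.2, p.1 + 2 * p.2)
lemma ψ_inj : Function.Injective ψ := by
  rintro ⟨a, b⟩ ⟨c, d⟩ h
  simp only [ψ, Prod.mk.injEq, ← PNat.coe_inj, PNat.add_coe, PNat.mul_coe, PNat.val_ofNat] at h ⊢
  omega

lemma ψ_sum (g : ℕ+ × ℕ+ → ℝ) :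
    ∑' p, g (ψ p) = ∑' p : ℕ+ × ℕ+, if p.1 < p.2 ∧ p.2 < 2 * p.1 then g p else 0 := by
  rw [← ψ_inj.tsum_eq (f := fun p : ℕ+ × ℕ+ => if p.1 < p.2 ∧ p.2 < 2 * p.1 then g p else 0)]
  · congr 1; ext ⟨a, b⟩
    have : (ψ (a, b)).1 < (ψ (a, b)).2 ∧ (ψ (a, b)).2 < 2 * (ψ (a, b)).1 := by
      have := a.pos
      have := b.pos
      simp only [ψ, ← PNat.coe_lt_coe, PNat.add_coe, PNat.mul_coe, PNat.val_ofNat]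
      omega
    rw [if_pos this]
  · rintro ⟨a, b⟩ h
    have : a < b ∧ b < 2 * a := by by_contra h'; simp only [Function.mem_support] at h; rw [if_neg h'] at h; exact h rfl
    obtain ⟨h1, h2⟩ := this
    simp only [← PNat.coe_lt_coe, PNat.mul_coe, PNat.val_ofNat] at h1 h2
    refine ⟨(⟨2 * a - b, by omega⟩, ⟨b - a, by omega⟩), ?_⟩
    refine Prod.ext (PNat.coe_injective ?_) (PNat.coe_injective ?_)
    · change (2 * (a : ℕ) - b) + (b - a) = (a : ℕ)
      omega
    · change (2 * (a : ℕ) - b) + 2 * (b - a) = (b : ℕ)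
      omega

noncomputable def P : ℝ := ∑' p : ℕ+ × ℕ+, if p.2 < p.1 then (-1) ^ (p.1 : ℕ) * f p else 0
noncomputable def Z22 : ℝ := ∑' p : ℕ+ × ℕ+, if p.2 < p.1 then f p else 0
noncomputable def T : ℝ := ∑' p : ℕ+ × ℕ+, if p.1 < p.2 ∧ p.2 < 2 * p.1 then f p else 0

lemma abs_sgn (n : ℕ) (x : ℝ) : |(-1) ^ n * x| = |x| := by
  rw [abs_mul, abs_pow, abs_neg, abs_one, one_pow, one_mul]

lemma zso : zetaSO 0 0 2 2 = T := by
  unfold T zetaSO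
  rw [← ψ_sum, Summable.tsum_prod]
  · congr 1; ext m; congr 1; ext n
    simp only [f, ψ]; push_cast; field_simp
  · exact sumf.comp_injective ψ_inj

noncomputable def q (p : ℕ+ × ℕ+) : ℝ :=
  (-1) ^ ((p.1 : ℕ) + p.2) * (1 / (((p.1 : ℝ) + p.2) ^ 3 * p.1))

lemma q_sum : Summable q := by
  apply sumb (C := 1)
  rintro ⟨a, b⟩
  simp only [q, abs_sgn, f]
  have ha : (1 : ℝ) ≤ a := by exact_mod_cast a.pos
  have hb : (1 : ℝ) ≤ b := by exact_mod_cast b.pos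
  rw [abs_of_nonneg (by positivity), one_mul, one_div_mul_one_div_rev]
  apply one_div_le_one_div_of_le (by positivity)
  have : (b : ℝ) ^ 2 * a ≤ (a + b) ^ 3 := by nlinarith [mul_pos (by linarith : (0:ℝ) < a) (by linarith : (0:ℝ) < b), pow_pos (by linarith : (0:ℝ) < a) 3, pow_pos (by linarith : (0:ℝ) < b) 3, mul_pos (pow_pos (by linarith : (0:ℝ) < a) 2) (by linarith : (0:ℝ) < b),  mul_pos (pow_pos (by linarith : (0:ℝ) < b) 2) (by linarith : (0:ℝ) < a)]
  nlinarith

lemma es : es2 3 1 (-1) 1 = ∑' p, q p := by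
  unfold es2
  rw [q_sum.tsum_prod]
  congr 1; ext m; congr 1; ext n
  simp [q, div_eq_mul_inv]

noncomputable def r (p : ℕ+ × ℕ+) : ℝ := (-1) ^ ((p.1 : ℕ) + p.2) * f (φ p)

lemma r_sum : Summable r := by
  refine Summable.of_norm_bounded (sumf.comp_injective φ_inj) fun p => ?_
  rw [r, Real.norm_eq_abs, abs_sgn, abs_of_nonneg (f_nonneg _)]; rfl

lemma P_eq : P = ∑' p, r p := by
  unfold P
  rw [← φ_sum (fun p => (-1) ^ (p.1 : ℕ) * f p)]
  congr 1

lemma shuffle : (∑' m, e m) ^ 2 = 2 * P + 4 * es2 3 1 (-1) 1 := by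
  rw [sq, tsum_mul_tsum_of_summable_norm sume sume, es, P_eq]
  have hr' : Summable (fun p : ℕ+ × ℕ+ => r p.swap) := r_sum.prod_symm
  have hq' : Summable (fun p : ℕ+ × ℕ+ => q p.swap) := q_sum.prod_symm
  have hr : ∑' p : ℕ+ × ℕ+, r p.swap = ∑' p, r p := (Equiv.prodComm ℕ+ ℕ+).tsum_eq r
  have hq : ∑' p : ℕ+ × ℕ+, q p.swap = ∑' p, q p := (Equiv.prodComm ℕ+ ℕ+).tsum_eq q
  have : ∀ p : ℕ+ × ℕ+, e p.1 * e p.2 = (r p + r p.swap) + 2 * (q p + q p.swap) := by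
    rintro ⟨a, b⟩
    have ha : (a : ℝ) ≠ 0 := by positivity
    have hb : (b : ℝ) ≠ 0 := by positivity
    have hab : (a : ℝ) + b ≠ 0 := by positivity
    simp only [e, r, q, f, φ, Prod.swap, PNat.add_coe, Nat.cast_add, add_comm (b : ℕ) a, add_comm (b : ℝ) a]
    rw [pow_add]
    generalize ((-1 : ℝ) ^ (a : ℕ)) = u
    generalize ((-1 : ℝ) ^ (b : ℕ)) = v
    field_simp
    ring
  simp_rw [this]
  rw [(r_sum.add hr').tsum_add ((q_sum.add hq').mul_left 2), r_sum.tsum_add hr', tsum_mul_left,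
    q_sum.tsum_add hq', hr, hq]
  ring

lemma sum_ite (s : ℕ+ × ℕ+ → Prop) [DecidablePred s] :
    Summable (fun p => if s p then f p else 0) := by
  apply sumb (C := 1)
  intro p
  have := f_nonneg p
  split_ifs
  · rw [abs_of_nonneg this, one_mul]
  · simpa using this

lemma diag : ∑' p : ℕ+ × ℕ+, (if p.1 = p.2 then f p else 0) = rzeta 4 := by
  have hi : Function.Injective (fun a : ℕ+ => (a, a)) := fun a b h => by simpa using h
  rw [← hi.tsum_eq, rzeta]
  · congr 1; ext m
    simp only [f, if_true]; field_simp
  · rintro ⟨a, b⟩ h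
    have : a = b := by by_contra h'; simp [h'] at h
    exact ⟨a, by simp [this]⟩

lemma stuffle : rzeta 2 ^ 2 = 2 * Z22 + rzeta 4 := by
  have hs : Summable (fun m : ℕ+ => ‖1 / (m : ℝ) ^ 2‖) := sum2.norm
  have h0 : rzeta 2 ^ 2 = ∑' p, f p := by
    rw [sq, rzeta, tsum_mul_tsum_of_summable_norm hs hs]; rfl
  have h1 : ∑' p : ℕ+ × ℕ+, (if p.1 < p.2 then f p else 0) = Z22 := by
    unfold Z22
    rw [← (Equiv.prodComm ℕ+ ℕ+).tsum_eq]
    congr 1; ext ⟨a, b⟩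
    simp [f, mul_comm]
  have : ∀ p : ℕ+ × ℕ+, f p = (if p.1 < p.2 then f p else 0) + (if p.2 < p.1 then f p else 0)
      + (if p.1 = p.2 then f p else 0) := by
    intro p
    rcases lt_trichotomy p.1 p.2 with h | h | h
    · simp [h, h.not_gt, h.ne]
    · simp [h]
    · simp [h, h.not_gt, h.ne']
  rw [h0, tsum_congr this, ((sum_ite _).add (sum_ite _)).tsum_add (sum_ite _),
    (sum_ite _).tsum_add (sum_ite _), h1, diag]
  change Z22 + Z22 + _ = _
  ring

lemma region : 2 * (Z22 + P) = Z22 + rzeta 4 + T := by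
  have hP : Summable (fun p : ℕ+ × ℕ+ => if p.2 < p.1 then (-1) ^ (p.1 : ℕ) * f p else 0) := by
    apply sumb (C := 1)
    intro p
    have := f_nonneg p
    split_ifs
    · rw [abs_sgn, abs_of_nonneg this, one_mul]
    · simpa using this
  have h1 : 2 * (Z22 + P) = ∑' p : ℕ+ × ℕ+, if p.2 < 2 * p.1 then f p else 0 := by
    have hi : Function.Injective (fun p : ℕ+ × ℕ+ => (2 * p.1, p.2)) := by
      rintro ⟨a, b⟩ ⟨c, d⟩ h
      simpa using h
    unfold Z22 P
    rw [← (sum_ite _).tsum_add hP, ← tsum_mul_left, ← hi.tsum_eq]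
    · congr 1; ext ⟨a, b⟩
      simp only
      split_ifs
      · simp only [f, PNat.mul_coe, PNat.val_ofNat, Nat.cast_mul, Nat.cast_ofNat,
          (even_two_mul (a : ℕ)).neg_one_pow]
        field_simp; norm_num
      · simp
    · rintro ⟨a, b⟩ h
      obtain ⟨k, hk⟩ := even_of (m := a) (by
        intro h'
        apply h
        simp only
        split_ifs
        · linear_combination 2 * f (a, b) * h'
        · simp)
      exact ⟨(k, b), by simp [hk]⟩
  have : ∀ p : ℕ+ × ℕ+, (if p.2 < 2 * p.1 then f p else 0) = (if p.2 < p.1 then f p else 0)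
      + (if p.1 = p.2 then f p else 0) + (if p.1 < p.2 ∧ p.2 < 2 * p.1 then f p else 0) := by
    rintro ⟨a, b⟩
    have h2 : a < 2 * a := by
      have := a.pos
      simp only [← PNat.coe_lt_coe, PNat.mul_coe, PNat.val_ofNat]; omega
    rcases lt_trichotomy a b with h | h | h
    · simp [h, h.not_gt, h.ne]
    · subst h; simp [h2]
    · simp [h, h.not_gt, h.ne', h.trans h2]
  rw [h1, tsum_congr this, ((sum_ite _).add (sum_ite _)).tsum_add (sum_ite _),
    (sum_ite _).tsum_add (sum_ite _), diag]
  rfl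

end S16

theorem stmt16 : zetaSO 0 0 2 2 = (3 / 8) * rzeta 4 - 4 * es2 3 1 (-1) 1 := by
  have h1 := S16.shuffle
  have h2 := S16.stuffle
  have h3 := S16.region
  rw [S16.E_eq] at h1
  rw [S16.zso]
  have h4 : S16.P * 2 = (rzeta 2) ^ 2 / 4 - 4 * es2 3 1 (-1) 1 := by linarith
  have h5 : rzeta 2 ^ 2 = 5 / 2 * rzeta 4 := by rw [S16.z2, S16.z4]; ring
  linarith
end

section
/- ζ_so(1,1,1,1) = (1/2)·ζ(4) − 2·ζ(3,1; −1,1), where ζ(3,1;−1,1) = ∑_{m>n≥1} (−1)^m/(m^3 n). -/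
open Finset in
theorem aux_diag (f : ℕ → ℕ → ℝ)
    (hf : ∀ i j : ℕ, |f (i+1) (j+1)| ≤ 1 / ((i:ℝ)+1)^2 * (1 / ((j:ℝ)+1)^2)) :
    HasSum (fun N => ∑ p ∈ HasAntidiagonal.antidiagonal N, f (p.1+1) (p.2+1)) (∑' (m : ℕ+) (n : ℕ+), f m n) := by
  have h2 : Summable (fun i : ℕ => 1 / ((i:ℝ)+1)^2) := by
    have := (summable_nat_add_iff 1).2 (Real.summable_one_div_nat_pow.2 (le_refl 2))
    simpa using this
  have hprod : Summable (fun p : ℕ × ℕ => 1 / ((p.1:ℝ)+1)^2 * (1 / ((p.2:ℝ)+1)^2)) :=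
    h2.mul_of_nonneg h2 (fun i => by positivity) (fun i => by positivity)
  have hs : Summable (fun p : ℕ × ℕ => f (p.1+1) (p.2+1)) :=
    Summable.of_norm_bounded hprod (fun p => by simpa using hf p.1 p.2)
  have e1 : (∑' (m : ℕ+) (n : ℕ+), f m n) = ∑' p : ℕ × ℕ, f (p.1+1) (p.2+1) := by
    rw [hs.tsum_prod]
    rw [tsum_pnat_eq_tsum_succ (f := fun m => ∑' n : ℕ+, f m n)]
    refine tsum_congr fun i => ?_
    exact tsum_pnat_eq_tsum_succ (f := fun n => f (i+1) n)
  rw [e1]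
  have h3 := (Finset.HasAntidiagonal.sigmaAntidiagonalEquivProd (A := ℕ)).hasSum_iff.2 hs.hasSum
  have h4 := h3.sigma (fun N => hasSum_fintype _)
  convert h4 using 2 with N
  rw [← Finset.sum_coe_sort]
  rfl

theorem aux_congr {f g : ℕ → ℝ} {a : ℝ} (h : ∀ N, f N = g N) (hg : HasSum g a) :
    HasSum f a := by
  rw [funext h]
  exact hg

noncomputable def auxH (N : ℕ) : ℝ := ∑ j ∈ Finset.range N, 1 / ((j:ℝ)+1)

noncomputable def auxa (M : ℕ) : ℝ := auxH (M-1) / (M:ℝ)^3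

theorem auxH_anti1 (N : ℕ) :
    ∑ p ∈ Finset.HasAntidiagonal.antidiagonal N, 1 / ((p.1:ℝ)+1) = auxH (N+1) := by
  rw [Finset.Nat.sum_antidiagonal_eq_sum_range_succ_mk]
  rfl

theorem auxH_anti2 (N : ℕ) :
    ∑ p ∈ Finset.HasAntidiagonal.antidiagonal N, 1 / ((p.2:ℝ)+1) = auxH (N+1) := by
  rw [← auxH_anti1, ← Finset.Nat.sum_antidiagonal_swap]
  rfl

theorem auxH_anti3 (N : ℕ) :
    ∑ p ∈ Finset.HasAntidiagonal.antidiagonal N, 1 / ((N:ℝ)+2+(p.2+1)) = auxH (2*N+3) - auxH (N+2) := by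
  rw [← Finset.Nat.sum_antidiagonal_swap, Finset.Nat.sum_antidiagonal_eq_sum_range_succ_mk]
  have : 2*N+3 = (N+2)+(N+1) := by ring
  rw [this, auxH, Finset.sum_range_add, ← auxH, add_sub_cancel_left]
  refine Finset.sum_congr rfl fun j _ => ?_
  simp only [Prod.swap]
  push_cast
  ring_nf

theorem aux_e (x : ℝ) (hx : |x| = 1) :
    HasSum (fun M => x^M * auxa M) (es2 3 1 x 1) := by
  have h := aux_diag (fun n k => x^(n+k) * 1^n / (((n:ℝ)+k)^3*(n:ℝ)^1)) (by
    intro i j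
    simp only [one_pow, mul_one, pow_one, abs_div, abs_pow, hx]
    push_cast
    rw [abs_of_nonneg (by positivity), one_div_mul_one_div_rev]
    apply one_div_le_one_div_of_le (by positivity)
    have hi : (0:ℝ) ≤ i := by positivity
    have hj : (0:ℝ) ≤ j := by positivity
    have : ((j:ℝ)+1)^2 * ((i:ℝ)+1) ≤ (((i:ℝ)+1)+((j:ℝ)+1))^2 * (((i:ℝ)+1)+((j:ℝ)+1)) := by
      refine mul_le_mul ?_ (by linarith) (by positivity) (by positivity)
      exact pow_le_pow_left₀ (by positivity) (by linarith) 2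
    nlinarith [mul_le_mul_of_nonneg_right this (by positivity : (0:ℝ) ≤ (i:ℝ)+1)])
  rw [← hasSum_nat_add_iff' 2]
  simp only [Finset.sum_range_succ, Finset.sum_range_zero, auxa, auxH]
  norm_num
  unfold es2
  refine aux_congr (fun N => ?_) h
  simp only [← one_div]
  rw [show (∑ j ∈ Finset.range (N+1), 1 / ((j:ℝ)+1)) = auxH (N+1) from rfl, ← auxH_anti1,
    Finset.sum_div, Finset.mul_sum]
  refine Finset.sum_congr rfl fun p hp => ?_
  have hp' := Finset.HasAntidiagonal.mem_antidiagonal.1 hp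
  have hN : (N:ℝ) = p.1 + p.2 := by exact_mod_cast hp'.symm
  rw [show p.1+1+(p.2+1) = N+2 by omega, hN]
  push_cast
  field_simp
  ring

theorem aux_s :
    HasSum (fun M : ℕ => 1/2 * (1/(M:ℝ)^4) + 2 * auxa M - 4 * auxa (2*M)) (zetaSO 1 1 1 1) := by
  have h := aux_diag (fun m n => 1 / ((m:ℝ)^1*(n:ℝ)^1*((m:ℝ)+n)^1*((m:ℝ)+2*n)^1)) (by
    intro i j
    push_cast
    rw [abs_of_nonneg (by positivity), one_div_mul_one_div_rev]
    apply one_div_le_one_div_of_le (by positivity)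
    have hi : (0:ℝ) ≤ i := by positivity
    have hj : (0:ℝ) ≤ j := by positivity
    have : ((i:ℝ)+1) * ((j:ℝ)+1) ≤ (((i:ℝ)+1)+((j:ℝ)+1)) * (((i:ℝ)+1)+2*((j:ℝ)+1)) := by
      exact mul_le_mul (by linarith) (by linarith) (by positivity) (by positivity)
    nlinarith [mul_le_mul_of_nonneg_right this (by positivity : (0:ℝ) ≤ ((i:ℝ)+1)*((j:ℝ)+1))])
  rw [← hasSum_nat_add_iff' 2]
  simp only [Finset.sum_range_succ, Finset.sum_range_zero, auxa]
  have z : auxH 0 = 0 := by simp [auxH]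
  have o : auxH 1 = 1 := by simp [auxH]
  norm_num [z, o]
  unfold zetaSO
  refine aux_congr (fun N => ?_) h
  have key : ∀ p ∈ Finset.HasAntidiagonal.antidiagonal N,
      1 / (((p.1+1:ℕ):ℝ)^1*((p.2+1:ℕ):ℝ)^1*(((p.1+1:ℕ):ℝ)+(p.2+1:ℕ))^1*(((p.1+1:ℕ):ℝ)+2*(p.2+1:ℕ))^1)
      = 1/(2*((N:ℝ)+2)^3) * (2 * (1/((p.2:ℝ)+1)) + 1/((p.1:ℝ)+1) - 1/((N:ℝ)+2+(p.2+1))) := by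
    intro p hp
    have hp' := Finset.HasAntidiagonal.mem_antidiagonal.1 hp
    have hN : (N:ℝ) = p.1 + p.2 := by exact_mod_cast hp'.symm
    rw [hN]
    push_cast
    have h1 : (p.1:ℝ)+1 ≠ 0 := by positivity
    have h2 : (p.2:ℝ)+1 ≠ 0 := by positivity
    have h3 : (p.1:ℝ)+1+(p.2+1) ≠ 0 := by positivity
    have h4 : (p.1:ℝ)+1+2*(p.2+1) ≠ 0 := by positivity
    have h5 : (p.1:ℝ)+p.2+2 ≠ 0 := by positivity
    have h6 : (p.1:ℝ)+p.2+2+(p.2+1) ≠ 0 := by positivity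
    field_simp
    ring
  rw [Finset.sum_congr rfl key, ← Finset.mul_sum, Finset.sum_sub_distrib, Finset.sum_add_distrib,
    ← Finset.mul_sum, auxH_anti1, auxH_anti2, auxH_anti3]
  rw [show 2*(N+2)-1 = 2*N+3 by omega]
  have : auxH (N+2) = auxH (N+1) + 1/((N:ℝ)+2) := by
    rw [auxH, Finset.sum_range_succ, ← auxH]
    push_cast
    ring
  rw [this]
  have : (N:ℝ)+2 ≠ 0 := by positivity
  field_simp
  ring

theorem stmt17 : zetaSO 1 1 1 1 = (1 / 2) * rzeta 4 - 2 * es2 3 1 (-1) 1 := by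
  have hA := aux_e 1 (by simp)
  have hB := aux_e (-1) (by simp)
  simp only [one_pow, one_mul] at hA
  have hz : HasSum (fun M : ℕ => 1/(M:ℝ)^4) (rzeta 4) := by
    have hs := Real.summable_one_div_nat_pow.2 (show 1 < 4 by norm_num)
    have := hs.hasSum
    rw [hs.tsum_eq_zero_add] at this
    rw [rzeta, tsum_pnat_eq_tsum_succ (f := fun m : ℕ => 1/(m:ℝ)^4)]
    simpa using this
  have hE : Summable (fun M => auxa (2*M)) :=
    hA.summable.comp_injective (fun a b h => by simpa using h)
  have hO : Summable (fun M => auxa (2*M+1)) :=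
    hA.summable.comp_injective (fun a b h => by simpa using h)
  have h1 := hA.unique (hE.hasSum.even_add_odd hO.hasSum)
  have hB2 : HasSum (fun M => (-1:ℝ)^M * auxa M)
      (∑' M, auxa (2*M) + -∑' M, auxa (2*M+1)) := by
    apply HasSum.even_add_odd
    · simpa [pow_mul] using hE.hasSum
    · simpa [pow_succ, pow_mul] using hO.hasSum.neg
  have h2 := hB.unique hB2
  have h3 := aux_s.unique (((hz.mul_left (1/2)).add (hA.mul_left 2)).sub (hE.hasSum.mul_left 4))
  rw [h3, h2, h1]
  ring
end

section
/- ζ_so(2,2,2,0) = ζ_MT(2,2;2) = (8/105)·ζ(2)^3 = π^6/2835, and ζ_so(2,1,1,2) = (1/60)·ζ(2)^3 = π^6/12960, and ζ_so(0,2,2,2) = (1/105)·ζ(2)^3 = π^6/22680. -/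
noncomputable def zetaMT2 (s1 s2 s : ℕ) : ℝ :=
  ∑' (m : ℕ+) (n : ℕ+), 1 / ((m : ℝ) ^ s1 * (n : ℝ) ^ s2 * ((m : ℝ) + (n : ℝ)) ^ s)

open Finset

lemma aux_z2 : HasSum (fun a : ℕ => 1 / ((a : ℝ) + 1) ^ 2) (Real.pi ^ 2 / 6) := by
  have h := (hasSum_nat_add_iff' 1).mpr hasSum_zeta_two
  simpa using h

lemma aux_z4 : HasSum (fun a : ℕ => 1 / ((a : ℝ) + 1) ^ 4) (Real.pi ^ 4 / 90) := by
  have h := (hasSum_nat_add_iff' 1).mpr hasSum_zeta_four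
  simpa using h

lemma aux_b6 : bernoulli 6 = 1 / 42 := by
  rw [bernoulli_eq_bernoulli'_of_ne_one (by norm_num), bernoulli'_def]
  have h5 : bernoulli' 5 = 0 := bernoulli'_eq_zero_of_odd (by decide) (by norm_num)
  have c2 : Nat.choose 6 2 = 15 := by decide
  have c3 : Nat.choose 6 3 = 20 := by decide
  have c4 : Nat.choose 6 4 = 15 := by decide
  norm_num [sum_range_succ, h5, c2, c3, c4]

lemma aux_z6 : HasSum (fun a : ℕ => 1 / ((a : ℝ) + 1) ^ 6) (Real.pi ^ 6 / 945) := by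
  have h := (hasSum_nat_add_iff' 1).mpr (hasSum_zeta_nat (k := 3) (by norm_num))
  have e : (2 * 3).factorial = 720 := by decide
  simp only [e] at h
  norm_num [aux_b6] at h
  convert! h using 1
  · ext a; simp
  · ring

noncomputable def aH (k m : ℕ) : ℝ := ∑ i ∈ range m, 1 / ((i : ℝ) + 1) ^ k

lemma aH_succ (k m : ℕ) : aH k (m + 1) = aH k m + 1 / ((m : ℝ) + 1) ^ k := by
  simp [aH, sum_range_succ]

lemma aux_tel1 (m : ℕ) :
    HasSum (fun b : ℕ => 1 / ((b : ℝ) + m + 1) - 1 / ((b : ℝ) + m + 2)) (1 / ((m : ℝ) + 1)) := by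
  rw [hasSum_iff_tendsto_nat_of_nonneg]
  · have h : ∀ n : ℕ, ∑ b ∈ range n, (1 / ((b : ℝ) + m + 1) - 1 / ((b : ℝ) + m + 2))
        = 1 / ((m : ℝ) + 1) - 1 / (((n + m : ℕ) : ℝ) + 1) := by
      intro n
      induction n with
      | zero => simp
      | succ n ih =>
        rw [sum_range_succ, ih]; push_cast; ring
    simp_rw [h]
    have h2 := (tendsto_one_div_add_atTop_nhds_zero_nat (𝕜 := ℝ)).comp
      (Filter.tendsto_add_atTop_nat m)
    simpa using h2.const_sub (1 / ((m : ℝ) + 1))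
  · intro b
    rw [sub_nonneg]
    apply one_div_le_one_div_of_le <;> [positivity; linarith]

lemma aux_tel (m : ℕ) :
    HasSum (fun b : ℕ => 1 / ((b : ℝ) + 1) - 1 / ((b : ℝ) + m + 1)) (aH 1 m) := by
  induction m with
  | zero => simp [aH, hasSum_zero]
  | succ m ih =>
    rw [aH_succ]
    convert! ih.add (aux_tel1 m) using 1
    · ext b; push_cast; ring
    · ring

lemma aux_row (a : ℕ) :
    HasSum (fun b : ℕ => 1 / (((a : ℝ) + 1) ^ 2 * ((b : ℝ) + 1) ^ 2 * ((a : ℝ) + b + 2) ^ 2))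
      (1 / ((a : ℝ) + 1) ^ 4 *
        (2 * (Real.pi ^ 2 / 6) - aH 2 (a + 1) - 2 * aH 1 (a + 1) / ((a : ℝ) + 1))) := by
  have h1 := aux_z2
  have h2 := (hasSum_nat_add_iff' (a + 1)).mpr aux_z2
  have h3 := aux_tel (a + 1)
  have h4 := ((h1.add h2).sub (h3.mul_left (2 / ((a : ℝ) + 1)))).mul_left (1 / ((a : ℝ) + 1) ^ 4)
  convert! h4 using 1
  · ext b
    have : (a : ℝ) + b + 2 ≠ 0 := by positivity
    have : (a : ℝ) + 1 ≠ 0 := by positivity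
    have : (b : ℝ) + 1 ≠ 0 := by positivity
    have e1 : ((b + (a + 1) : ℕ) : ℝ) + 1 = (a : ℝ) + b + 2 := by push_cast; ring
    have e2 : (b : ℝ) + ((a + 1 : ℕ) : ℝ) + 1 = (a : ℝ) + b + 2 := by push_cast; ring
    rw [e1, e2]
    field_simp
    ring
  · simp only [aH]; ring

lemma aux_anti (k : ℕ) :
    ∑ p ∈ antidiagonal k,
      1 / (((p.1 : ℝ) + 1) ^ 2 * ((p.2 : ℝ) + 1) ^ 2 * ((p.1 : ℝ) + p.2 + 2) ^ 2)
      = 1 / ((k : ℝ) + 2) ^ 4 * (2 * aH 2 (k + 1) + 4 * aH 1 (k + 1) / ((k : ℝ) + 2)) := by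
  have hF : ∀ j : ℕ, ∑ p ∈ antidiagonal k, 1 / ((p.1 : ℝ) + 1) ^ j = aH j (k + 1) := by
    intro j
    rw [Finset.Nat.sum_antidiagonal_eq_sum_range_succ_mk]; rfl
  have hG : ∀ j : ℕ, ∑ p ∈ antidiagonal k, 1 / ((p.2 : ℝ) + 1) ^ j = aH j (k + 1) := by
    intro j
    rw [← hF j, ← Finset.Nat.sum_antidiagonal_swap]; rfl
  have key : ∀ p ∈ antidiagonal k,
      1 / (((p.1 : ℝ) + 1) ^ 2 * ((p.2 : ℝ) + 1) ^ 2 * ((p.1 : ℝ) + p.2 + 2) ^ 2)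
      = 1 / ((k : ℝ) + 2) ^ 4 * ((1 / ((p.1 : ℝ) + 1) ^ 2 + 1 / ((p.2 : ℝ) + 1) ^ 2)
        + 2 / ((k : ℝ) + 2) * (1 / ((p.1 : ℝ) + 1) ^ 1 + 1 / ((p.2 : ℝ) + 1) ^ 1)) := by
    intro p hp
    have hk : (k : ℝ) = p.1 + p.2 := by rw [← mem_antidiagonal.mp hp]; push_cast; rfl
    rw [hk]
    have : (p.1 : ℝ) + p.2 + 2 ≠ 0 := by positivity
    have : (p.1 : ℝ) + 1 ≠ 0 := by positivity
    have : (p.2 : ℝ) + 1 ≠ 0 := by positivity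
    field_simp
    ring
  rw [sum_congr rfl key, ← mul_sum, sum_add_distrib, sum_add_distrib, ← mul_sum, sum_add_distrib,
    hF, hG, hF, hG]
  ring

noncomputable def aG (p : ℕ × ℕ) : ℝ :=
  1 / (((p.1 : ℝ) + 1) ^ 2 * ((p.2 : ℝ) + 1) ^ 2 * ((p.1 : ℝ) + p.2 + 2) ^ 2)

lemma aG_summable : Summable aG := by
  have h := aux_z2.summable.mul_of_nonneg aux_z2.summable
    (fun a => by positivity) (fun a => by positivity)
  refine Summable.of_nonneg_of_le (fun p => by unfold aG; positivity) (fun p => ?_) h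
  unfold aG
  rw [← one_div_mul_one_div]
  rw [← one_div_mul_one_div]
  apply mul_le_of_le_one_right (by positivity)
  rw [div_le_one (by positivity)]
  have : (0 : ℝ) ≤ (p.1 : ℝ) + p.2 := by positivity
  nlinarith

lemma aG_tsum : HasSum aG (Real.pi ^ 6 / 2835) := by
  have hS := aG_summable.hasSum
  set T := ∑' p, aG p with hT
  have h1 := hS.prod_fiberwise (fun a => aux_row a)
  have h2 : HasSum (fun k : ℕ => 1 / ((k : ℝ) + 2) ^ 4 *
      (2 * aH 2 (k + 1) + 4 * aH 1 (k + 1) / ((k : ℝ) + 2))) T := by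
    have h := (Finset.HasAntidiagonal.sigmaAntidiagonalEquivProd (A := ℕ)).hasSum_iff.mpr hS
    refine h.sigma (fun k => ?_)
    rw [← aux_anti k]
    exact Finset.hasSum (antidiagonal k) aG
  have h3 : HasSum (fun a : ℕ => 1 / ((a : ℝ) + 1) ^ 4 *
      (2 * aH 2 a + 4 * aH 1 a / ((a : ℝ) + 1))) T := by
    rw [← hasSum_nat_add_iff' 1]
    convert! h2 using 1
    · ext k; push_cast; ring_nf
    · simp [aH]
  have h4 := (h1.mul_left 2).add h3
  have h5 := (aux_z4.mul_left (4 * (Real.pi ^ 2 / 6))).sub (aux_z6.mul_left 6)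
  have h6 : 2 * T + T = 4 * (Real.pi ^ 2 / 6) * (Real.pi ^ 4 / 90) - 6 * (Real.pi ^ 6 / 945) := by
    refine h4.unique ?_
    convert! h5 using 1
    ext a
    rw [aH_succ, aH_succ]
    have : (a : ℝ) + 1 ≠ 0 := by positivity
    field_simp
    ring
  have : T = Real.pi ^ 6 / 2835 := by linarith
  rwa [this] at hS

def aE : ℕ ⊕ ((ℕ × ℕ) ⊕ (ℕ × ℕ)) → ℕ × ℕ
  | Sum.inl x => (x, x)
  | Sum.inr (Sum.inl p) => (p.2, p.1 + p.2 + 1)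
  | Sum.inr (Sum.inr p) => (p.1 + p.2 + 1, p.2)

lemma aE_bij : Function.Bijective aE := by
  constructor
  · rintro (x | ⟨a, b⟩ | ⟨a, b⟩) (y | ⟨c, d⟩ | ⟨c, d⟩) h <;>
      simp only [aE, Prod.mk.injEq, Sum.inl.injEq, Sum.inr.injEq, reduceCtorEq] at h ⊢ <;> omega
  · rintro ⟨x, y⟩
    rcases lt_trichotomy x y with h | h | h
    · exact ⟨Sum.inr (Sum.inl (y - x - 1, x)), by simp only [aE, Prod.mk.injEq, true_and, and_true]; omega⟩
    · exact ⟨Sum.inl x, by simp only [aE, Prod.mk.injEq, true_and, and_true]; omega⟩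
    · exact ⟨Sum.inr (Sum.inr (x - y - 1, y)), by simp only [aE, Prod.mk.injEq, true_and, and_true]; omega⟩

lemma aux_C : HasSum (fun p : ℕ × ℕ => aG (p.2, p.1 + p.2 + 1)) (Real.pi ^ 6 / 22680) := by
  have hs : Summable (fun p : ℕ × ℕ => aG (p.2, p.1 + p.2 + 1)) := by
    refine aG_summable.comp_injective (i := fun p : ℕ × ℕ => (p.2, p.1 + p.2 + 1)) ?_
    rintro ⟨a, b⟩ ⟨c, d⟩ h
    simp only [Prod.mk.injEq] at h ⊢
    omega
  have h1 := hs.hasSum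
  set C := ∑' p : ℕ × ℕ, aG (p.2, p.1 + p.2 + 1)
  have h2 : HasSum (fun p : ℕ × ℕ => aG (p.1 + p.2 + 1, p.2)) C := by
    convert! h1 using 1
    ext p
    simp only [aG]
    ring_nf
  have h3 : HasSum (fun x : ℕ => aG (x, x)) (1 / 4 * (Real.pi ^ 6 / 945)) := by
    convert! aux_z6.mul_left (1 / 4) using 1
    ext x
    simp only [aG]
    have : (x : ℝ) + x + 2 = 2 * (x + 1) := by ring
    rw [this]
    have : (x : ℝ) + 1 ≠ 0 := by positivity
    field_simp
    norm_num
  have h4 : HasSum (aG ∘ aE) (1 / 4 * (Real.pi ^ 6 / 945) + (C + C)) :=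
    HasSum.sum h3 (HasSum.sum h1 h2)
  have h5 : HasSum (aG ∘ aE) (Real.pi ^ 6 / 2835) :=
    (Equiv.ofBijective aE aE_bij).hasSum_iff.mpr aG_tsum
  have h6 := h4.unique h5
  have : C = Real.pi ^ 6 / 22680 := by linarith
  rwa [this] at h1

lemma aux_pnat (f : ℝ → ℝ → ℝ) (S : ℝ)
    (h : HasSum (fun p : ℕ × ℕ => f ((p.1 : ℝ) + 1) ((p.2 : ℝ) + 1)) S) :
    ∑' (m : ℕ+) (n : ℕ+), f m n = S := by
  rw [← h.tsum_eq, h.summable.tsum_prod, ← Equiv.pnatEquivNat.symm.tsum_eq]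
  refine tsum_congr fun a => ?_
  rw [← Equiv.pnatEquivNat.symm.tsum_eq]
  refine tsum_congr fun b => ?_
  simp [Equiv.pnatEquivNat]

lemma aux_rz : rzeta 2 = Real.pi ^ 2 / 6 := by
  unfold rzeta
  rw [← aux_z2.tsum_eq, ← Equiv.pnatEquivNat.symm.tsum_eq]
  refine tsum_congr fun a => ?_
  simp [Equiv.pnatEquivNat]

lemma aux_MT : zetaMT2 2 2 2 = Real.pi ^ 6 / 2835 := by
  unfold zetaMT2
  refine aux_pnat (fun x y => 1 / (x ^ 2 * y ^ 2 * (x + y) ^ 2)) _ ?_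
  convert! aG_tsum using 1
  ext p
  simp only [aG]
  ring_nf

lemma aux_SO3 : zetaSO 0 2 2 2 = Real.pi ^ 6 / 22680 := by
  unfold zetaSO
  refine aux_pnat (fun x y => 1 / (x ^ 0 * y ^ 2 * (x + y) ^ 2 * (x + 2 * y) ^ 2)) _ ?_
  convert! aux_C using 1
  ext p
  simp only [aG]
  push_cast
  ring_nf

lemma aux_SO2 : zetaSO 2 1 1 2 = Real.pi ^ 6 / 12960 := by
  unfold zetaSO
  refine aux_pnat (fun x y => 1 / (x ^ 2 * y ^ 1 * (x + y) ^ 1 * (x + 2 * y) ^ 2)) _ ?_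
  convert! (aG_tsum.sub aux_C).mul_left (1 / 4) using 1
  · ext p
    simp only [aG]
    push_cast
    have e1 : (p.1 : ℝ) + 1 ≠ 0 := by positivity
    have e2 : (p.2 : ℝ) + 1 ≠ 0 := by positivity
    have e3 : (p.1 : ℝ) + p.2 + 2 ≠ 0 := by positivity
    have e4 : (p.1 : ℝ) + 2 * p.2 + 3 ≠ 0 := by positivity
    have r1 : (p.1 : ℝ) + 1 + (p.2 + 1) = p.1 + p.2 + 2 := by ring
    have r2 : (p.1 : ℝ) + 1 + 2 * (p.2 + 1) = p.1 + 2 * p.2 + 3 := by ring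
    have r3 : (p.1 : ℝ) + p.2 + 1 + 1 = p.1 + p.2 + 2 := by ring
    have r4 : (p.2 : ℝ) + (p.1 + p.2 + 1) + 2 = p.1 + 2 * p.2 + 3 := by ring
    rw [r1, r2, r3, r4]
    field_simp
    ring
  · ring

theorem stmt18 :
    (zetaSO 2 2 2 0 = zetaMT2 2 2 2 ∧ zetaMT2 2 2 2 = (8 / 105) * (rzeta 2) ^ 3 ∧
      (8 / 105) * (rzeta 2) ^ 3 = Real.pi ^ 6 / 2835) ∧
    (zetaSO 2 1 1 2 = (1 / 60) * (rzeta 2) ^ 3 ∧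
      (1 / 60) * (rzeta 2) ^ 3 = Real.pi ^ 6 / 12960) ∧
    (zetaSO 0 2 2 2 = (1 / 105) * (rzeta 2) ^ 3 ∧
      (1 / 105) * (rzeta 2) ^ 3 = Real.pi ^ 6 / 22680) := by
  rw [aux_SO2, aux_SO3, aux_rz]
  refine ⟨⟨?_, ?_, by ring⟩, ⟨by ring, by ring⟩, by ring, by ring⟩
  · simp [zetaSO, zetaMT2]
  · rw [aux_MT]; ring
end
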